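/- arXiv:2508.18838 — 3 statements merged into one kernel-verified Lean document; each statement's English description precedes it below -/
import Mathlib

section
/- Let d ≥ 4 and let D be the edge set of the complete bipartite graph K_{d+2,d+3} with sides X (|X| = d+2) and Y = {y_1,…,y_{d+3}}. Then D is a double (2-fold) R_d-circuit; its principal partition is {A_1,…,A_{d+3}}, where A_i is the set of edges of D incident to y_i (so D ∖ A_i is the edge set of a copy of K_{d+2,d+2}); and r_d(⋂_{i=1}^{d+3} cl_d(D ∖ A_i)) = 0 < d+1 = (d+3) − 2, so D is not balanced. Consequently, for every k ≥ 2, the union of D with the edge sets of k−2 complete graphs K_{d+2} that are pairwise vertex-disjoint and vertex-disjoint from K_{d+2,d+3} is a k-fold R_d-circuit that is not balanced; in particular, the generic d-dimensional rigidity matroid does not satisfy the k-fold circuit property for any d ≥ 4 and k ≥ 2. -/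
open scoped BigOperators

/-- The row of the `d`-dimensional rigidity matrix of a realisation `p : V → ℝ^d`
indexed by the (unordered) edge `e`. -/
noncomputable def rigRow (d : ℕ) {V : Type*} [DecidableEq V]
    (p : V → Fin d → ℝ) (e : Sym2 V) : V × Fin d → ℝ :=
  Sym2.lift
    ⟨fun u v wi =>
        (((if wi.1 = u then (1 : ℝ) else 0) - (if wi.1 = v then (1 : ℝ) else 0)) *
          (p u wi.2 - p v wi.2)),
      fun u v => by funext wi; ring⟩ e

/-- A realisation is generic if the coordinates of the points form an algebraically
independent set over `ℚ`. -/
def Generic (d : ℕ) {V : Type*} (p : V → Fin d → ℝ) : Prop :=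
  AlgebraicIndependent ℚ fun vi : V × Fin d => p vi.1 vi.2

/-- `rrk d p F` : the rank of the set of rows of the rigidity matrix of `(K_V, p)`
indexed by the edges in `F`.  For generic `p` this is the rank function `r_d` of
the generic `d`-dimensional rigidity matroid. -/
noncomputable def rrk (d : ℕ) {V : Type*} [Fintype V] [DecidableEq V]
    (p : V → Fin d → ℝ) (F : Set (Sym2 V)) : ℕ :=
  Module.finrank ℝ (Submodule.span ℝ (rigRow d p '' F))

/-- `D` is a `k`-fold circuit (with respect to the realisation `p`) :
`r (D \ {f}) = r D` for every `f ∈ D`, and `r D = |D| - k`. -/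
def IsKFoldCircuit (d : ℕ) {V : Type*} [Fintype V] [DecidableEq V]
    (p : V → Fin d → ℝ) (D : Finset (Sym2 V)) (k : ℕ) : Prop :=
  (∀ f ∈ D, rrk d p (↑D \ {f}) = rrk d p ↑D) ∧ rrk d p ↑D + k = D.card

/-- An `R_d`-circuit: `r C = |C| - 1` and `r (C \ {f}) = r C` for all `f ∈ C`. -/
def IsCircuit (d : ℕ) {V : Type*} [Fintype V] [DecidableEq V]
    (p : V → Fin d → ℝ) (C : Finset (Sym2 V)) : Prop :=
  IsKFoldCircuit d p C 1

/-- `A` is a part of the principal partition of the `k`-fold circuit `D`: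
the parts are the sets `D \ B` where `B` runs over the `(k-1)`-fold circuits
contained in `D`. -/
def IsPrincipalPart (d : ℕ) {V : Type*} [Fintype V] [DecidableEq V]
    (p : V → Fin d → ℝ) (D : Finset (Sym2 V)) (k : ℕ) (A : Finset (Sym2 V)) : Prop :=
  ∃ B ⊆ D, IsKFoldCircuit d p B (k - 1) ∧ A = D \ B

/-- Closure in the rigidity matroid: all edges of `K_V` whose addition to `F`
does not increase the rank. -/
def rcl (d : ℕ) {V : Type*} [Fintype V] [DecidableEq V]
    (p : V → Fin d → ℝ) (F : Set (Sym2 V)) : Set (Sym2 V) :=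
  {e | ¬ e.IsDiag ∧ rrk d p (insert e F) = rrk d p F}

/-- A `k`-fold circuit `D` with principal partition `A_1, …, A_ℓ` is balanced if
`r_d (⋂ i, cl_d (D \ A_i)) = ℓ - k`. -/
def IsBalanced (d : ℕ) {V : Type*} [Fintype V] [DecidableEq V]
    (p : V → Fin d → ℝ) (D : Finset (Sym2 V)) (k : ℕ) : Prop :=
  rrk d p (⋂ A ∈ {A | IsPrincipalPart d p D k A}, rcl d p ↑(D \ A)) + k =
    Set.ncard {A | IsPrincipalPart d p D k A}

/-- A vertex is monochromatic if all edges of `D` incident with it lie in a single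
part of the principal partition (and technicolour otherwise). -/
def Monochromatic (d : ℕ) {V : Type*} [Fintype V] [DecidableEq V]
    (p : V → Fin d → ℝ) (D : Finset (Sym2 V)) (k : ℕ) (w : V) : Prop :=
  ∃ A, IsPrincipalPart d p D k A ∧ ∀ e ∈ D, w ∈ e → e ∈ A

/-- The graph `(W, E)` is `R_d`-rigid: it is a complete graph on at most `d+1`
vertices, or `r_d(E) = d|W| - (d+1 choose 2)`. -/
def IsRigidOn (d : ℕ) {V : Type*} [Fintype V] [DecidableEq V]
    (p : V → Fin d → ℝ) (W : Finset V) (E : Finset (Sym2 V)) : Prop :=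
  (W.card ≤ d + 1 ∧ ∀ u ∈ W, ∀ w ∈ W, u ≠ w → s(u, w) ∈ E) ∨
    (rrk d p ↑E : ℤ) + ((d + 1).choose 2 : ℤ) = (d : ℤ) * (W.card : ℤ)

/-- The edge set of the cone of (the graph with edge set) `D` over a new vertex,
realised as `none : Option V`. -/
def coneEdges {V : Type*} [Fintype V] [DecidableEq V] (D : Finset (Sym2 V)) :
    Finset (Sym2 (Option V)) :=
  D.image (Sym2.map Option.some) ∪
    Finset.univ.image fun u : V => s((Option.some u : Option V), (none : Option V))

/-- The degree of the vertex `w` in the edge set `D`. -/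
def degIn {V : Type*} [Fintype V] [DecidableEq V] (D : Finset (Sym2 V)) (w : V) : ℕ :=
  (D.filter fun e => w ∈ e).card

/-- The set of vertices incident with an edge of `F`. -/
def esupp {V : Type*} [Fintype V] [DecidableEq V] (F : Finset (Sym2 V)) : Finset V :=
  Finset.univ.filter fun w => ∃ e ∈ F, w ∈ e

/-- The vertex set: sides `X` (size `d+2`) and `Y` (size `d+3`) of `K_{d+2,d+3}`,
together with `k-2` disjoint copies of the vertex set of `K_{d+2}`. -/
abbrev BipV (d k : ℕ) : Type := (Fin (d+2) ⊕ Fin (d+3)) ⊕ (Fin (k-2) × Fin (d+2))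

def xv (d k : ℕ) (i : Fin (d+2)) : BipV d k := Sum.inl (Sum.inl i)
def yv (d k : ℕ) (j : Fin (d+3)) : BipV d k := Sum.inl (Sum.inr j)
def zv (d k : ℕ) (c : Fin (k-2)) (a : Fin (d+2)) : BipV d k := Sum.inr (c, a)

/-- The edge set of `K_{d+2,d+3}`. -/
def bipEdges (d k : ℕ) : Finset (Sym2 (BipV d k)) :=
  (Finset.univ ×ˢ Finset.univ).image fun t : Fin (d+2) × Fin (d+3) => s(xv d k t.1, yv d k t.2)

/-- `A_j` : the edges of `K_{d+2,d+3}` incident with `y_j`. -/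
def starAt (d k : ℕ) (j : Fin (d+3)) : Finset (Sym2 (BipV d k)) :=
  Finset.univ.image fun i : Fin (d+2) => s(xv d k i, yv d k j)

/-- The edge sets of `k-2` pairwise vertex-disjoint copies of `K_{d+2}`, all
vertex-disjoint from `K_{d+2,d+3}`. -/
def cliqueEdgesZ (d k : ℕ) : Finset (Sym2 (BipV d k)) :=
  ((Finset.univ : Finset (Fin (k-2) × Fin (d+2) × Fin (d+2))).filter
      fun t => t.2.1 ≠ t.2.2).image fun t => s(zv d k t.1 t.2.1, zv d k t.1 t.2.2)

section Helpers
open Finset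

/-- Linear independence at a rational specialisation implies it at a generic point. -/
lemma generic_linInd {σ m n : Type*} [Fintype m] [Fintype n] [DecidableEq m] [DecidableEq n]
    (P : σ → ℝ) (hP : AlgebraicIndependent ℚ P) (A : m → n → MvPolynomial σ ℚ) (p0 : σ → ℚ)
    (h : LinearIndependent ℚ (fun i j => MvPolynomial.eval p0 (A i j)))
    (c : m → ℝ) (hc : ∀ j, ∑ i, c i * MvPolynomial.aeval P (A i j) = 0) : c = 0 := by
  classical
  set v : m → n → ℚ := fun i j => MvPolynomial.eval p0 (A i j) with hv
  obtain ⟨φ, hφ⟩ := LinearMap.exists_leftInverse_of_injective (Fintype.linearCombination ℚ v)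
    (LinearMap.ker_eq_bot.2 (linearIndependent_iff_injective_fintypeLinearCombination.1 h))
  set B : Matrix n m ℚ := fun j i => φ (Pi.single j 1) i with hB
  have h1 : (Matrix.of v) * B = 1 := by
    ext i k
    have h2 : φ (v i) = Pi.single i 1 := by
      have := LinearMap.congr_fun hφ (Pi.single i 1)
      simpa [Fintype.linearCombination_apply_single] using this
    have h3 : v i = ∑ j, v i j • (Pi.single j 1 : n → ℚ) := by
      ext l
      simp [Finset.sum_apply, Pi.single_apply]
    rw [h3, map_sum] at h2
    have h4 := congrFun h2 k
    simp only [map_smul, Finset.sum_apply, Pi.smul_apply, smul_eq_mul] at h4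
    rw [Matrix.mul_apply, Matrix.one_apply]
    simp only [Matrix.of_apply, hB]
    rw [h4, Pi.single_apply]
    simp [eq_comm]
  set MP : Matrix m m (MvPolynomial σ ℚ) := 
    Matrix.of (fun i k => ∑ j, A i j * MvPolynomial.C (B j k)) with hMP
  have h5 : MvPolynomial.eval p0 MP.det = 1 := by
    have : (MvPolynomial.eval p0).mapMatrix MP = 1 := by
      rw [← h1]
      ext i k
      simp [hMP, Matrix.mul_apply, hv]
    rw [RingHom.map_det, this, Matrix.det_one]
  have h6 : MP.det ≠ 0 := by
    intro h0
    rw [h0] at h5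
    simp at h5
  have h7 : MvPolynomial.aeval P MP.det ≠ 0 := by
    intro h0
    exact h6 (hP.eq_zero_of_aeval_eq_zero _ h0)
  rw [AlgHom.map_det] at h7
  apply Matrix.eq_zero_of_vecMul_eq_zero h7
  ext k
  simp only [Matrix.vecMul, dotProduct, Pi.zero_apply, AlgHom.mapMatrix_apply, Matrix.map_apply,
    hMP, map_sum, map_mul, Matrix.of_apply, Finset.mul_sum]
  rw [Finset.sum_comm]
  apply Finset.sum_eq_zero
  intro j _
  rw [Finset.sum_congr rfl (fun i _ => (mul_assoc _ _ _).symm), ← Finset.sum_mul, hc j, zero_mul]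

/-- homogeneous coordinates -/
def hat {R : Type*} [One R] {d : ℕ} (x : Fin d → R) : Option (Fin d) → R
  | none => 1
  | some i => x i

/-- symmetric product of vectors -/
def sprod {R O : Type*} [CommRing R] (v w : O → R) : Sym2 O → R :=
  Sym2.lift ⟨fun a b => v a * w b + w a * v b, fun a b => by ring⟩

def qsq {R O : Type*} [CommRing R] (v : O → R) : Sym2 O → R :=
  Sym2.lift ⟨fun a b => v a * v b, fun a b => by ring⟩

lemma qsq_span (d : ℕ) :
    Submodule.span ℚ (Set.range fun t : Fin d → ℚ => qsq (hat t)) = ⊤ := by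
  classical
  set W := Submodule.span ℚ (Set.range fun t : Fin d → ℚ => qsq (hat t)) with hW
  have hq : ∀ t : Fin d → ℚ, qsq (hat t) ∈ W := fun t => Submodule.subset_span ⟨t, rfl⟩
  have h0 : ∀ v : Option (Fin d) → ℚ, v none = 0 → qsq v ∈ W := by
    intro v hv
    have : qsq v = (1/2 : ℚ) • qsq (hat fun i => v (some i))
        + (1/2 : ℚ) • qsq (hat fun i => - v (some i)) - qsq (hat fun _ => 0) := by
      ext e
      induction e with | _ a b =>
      rcases a with _ | a <;> rcases b with _ | b <;> simp [qsq, hat, hv] <;> ring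
    rw [this]
    exact W.sub_mem (W.add_mem (W.smul_mem _ (hq _)) (W.smul_mem _ (hq _))) (hq _)
  have h1 : ∀ v : Option (Fin d) → ℚ, qsq v ∈ W := by
    intro v
    by_cases hv : v none = 0
    · exact h0 v hv
    · have : qsq v = (v none)^2 • qsq (hat fun i => v (some i) / v none) := by
        ext e
        induction e with | _ a b =>
        rcases a with _ | a <;> rcases b with _ | b <;> simp [qsq, hat] <;> field_simp
      rw [this]
      exact W.smul_mem _ (hq _)
  have h2 : ∀ v w : Option (Fin d) → ℚ, sprod v w ∈ W := by
    intro v w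
    have : sprod v w = qsq (v + w) - qsq v - qsq w := by
      ext e
      induction e with | _ a b =>
      simp [qsq, sprod]; ring
    rw [this]
    exact W.sub_mem (W.sub_mem (h1 _) (h1 _)) (h1 _)
  rw [eq_top_iff]
  intro f _
  have hf : f = ∑ e, f e • (Pi.single e 1 : Sym2 (Option (Fin d)) → ℚ) := by
    ext l
    simp [Finset.sum_apply, Pi.single_apply]
  rw [hf]
  refine W.sum_mem fun e _ => W.smul_mem _ ?_
  induction e with | _ a b =>
  by_cases hab : a = b
  · subst hab
    convert h1 (Pi.single a 1) using 1
    ext e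
    induction e with | _ x y =>
    simp only [qsq, Sym2.lift_mk, Pi.single_apply, Sym2.eq_iff]
    grind
  · convert h2 (Pi.single a 1) (Pi.single b 1) using 1
    ext e
    induction e with | _ x y =>
    simp only [sprod, Sym2.lift_mk, Pi.single_apply, Sym2.eq_iff]
    grind

/-- family used in the Bolker–Roth argument -/
def qfam {R U : Type*} [CommRing R] {d : ℕ} (u0 u1 : U) (t : U → Fin d → R) :
    Option U → Sym2 (Option (Fin d)) → R
  | none => sprod (hat (t u0)) (hat (t u1))
  | some u => qsq (hat (t u))

lemma exists_spec (d : ℕ) (hd : 4 ≤ d) {U : Type*} [Fintype U] [DecidableEq U]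
    (hU : Fintype.card U = 2 * d + 5) (u0 u1 : U) (h01 : u0 ≠ u1) :
    ∃ t : U → Fin d → ℚ, LinearIndependent ℚ (qfam u0 u1 t) := by
  classical
  have key : ∀ S : Finset U, u0 ∉ S → u1 ∉ S → ∃ t : U → Fin d → ℚ,
      LinearIndepOn ℚ (qfam u0 u1 t)
        (({none, some u0, some u1} : Finset (Option U)) ∪ S.map Function.Embedding.some :
          Finset (Option U)) := by
    intro S
    induction S using Finset.induction_on with
    | empty =>
      intro _ _
      let i0 : Fin d := ⟨0, by omega⟩
      refine ⟨fun u i => if u = u1 ∧ i = i0 then 1 else 0, ?_⟩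
      rw [linearIndepOn_finset_iff]
      intro g hg
      simp only [Finset.map_empty, Finset.union_empty] at hg ⊢
      rw [Finset.sum_insert (by simp), Finset.sum_insert (by simp [h01]),
        Finset.sum_singleton] at hg
      have e1 := congrFun hg s(none, none)
      have e2 := congrFun hg s(none, some i0)
      have e3 := congrFun hg s(some i0, some i0)
      simp [qfam, qsq, sprod, hat, h01] at e1 e2 e3
      intro i hi
      simp only [Finset.mem_insert, Finset.mem_singleton] at hi
      rcases hi with rfl | rfl | rfl <;> linarith
    | insert v S hvS ih =>
      intro hu0 hu1
      simp only [Finset.mem_insert, not_or] at hu0 hu1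
      obtain ⟨t, ht⟩ := ih hu0.2 hu1.2
      set T : Finset (Option U) :=
        ({none, some u0, some u1} : Finset (Option U)) ∪ S.map Function.Embedding.some with hT
      have hTc : (insert (some v) T).card ≤ 2 * d + 6 := by
        refine (Finset.card_le_univ _).trans ?_
        simp [hU]
      have hvT : some v ∉ T := by
        simp [hT, Ne.symm hu0.1, Ne.symm hu1.1, hvS]
      rw [Finset.card_insert_of_notMem hvT] at hTc
      have hne : Submodule.span ℚ (qfam u0 u1 t '' T) ≠ ⊤ := by
        intro h
        have h1 : Module.finrank ℚ (Submodule.span ℚ (qfam u0 u1 t '' T)) ≤ T.card := by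
          rw [← Finset.coe_image]
          exact (finrank_span_finset_le_card _).trans Finset.card_image_le
        rw [h, finrank_top, Module.finrank_fintype_fun_eq_card, Sym2.card] at h1
        simp only [Fintype.card_option, Fintype.card_fin] at h1
        have h2 : 2 * d + 6 ≤ (d + 1 + 1).choose 2 := by
          rw [Nat.choose_two_right, Nat.le_div_iff_mul_le (by norm_num)]
          simp
          nlinarith
        omega
      obtain ⟨x, hx⟩ : ∃ x : Fin d → ℚ, qsq (hat x) ∉ Submodule.span ℚ (qfam u0 u1 t '' T) := by
        by_contra! hcon
        apply hne
        rw [eq_top_iff, ← qsq_span d, Submodule.span_le]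
        rintro _ ⟨x, rfl⟩
        exact hcon x
      refine ⟨Function.update t v x, ?_⟩
      have hT2 : ({none, some u0, some u1} : Finset (Option U)) ∪
          (insert v S).map Function.Embedding.some = insert (some v) T := by
        rw [hT, Finset.map_insert, Finset.union_insert]; rfl
      rw [hT2, Finset.coe_insert, linearIndepOn_insert (by exact_mod_cast hvT)]
      have heq : Set.EqOn (qfam u0 u1 (Function.update t v x)) (qfam u0 u1 t) T := by
        intro o ho
        rcases o with _ | o
        · simp [qfam, Function.update_of_ne hu0.1, Function.update_of_ne hu1.1]
        · have : o ≠ v := by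
            rintro rfl
            exact hvT (by exact_mod_cast ho)
          simp [qfam, Function.update_of_ne this]
      refine ⟨ht.congr heq.symm, ?_⟩
      rw [heq.image_eq]
      simpa [qfam] using hx
  obtain ⟨t, ht⟩ := key (Finset.univ.filter fun u => u ≠ u0 ∧ u ≠ u1) (by simp) (by simp)
  refine ⟨t, ?_⟩
  rw [← linearIndepOn_univ_iff]
  convert ht
  symm
  ext o
  rcases o with _ | o
  · simp
  · simp
    tauto

lemma hat_map {R R' : Type*} [CommRing R] [CommRing R'] (φ : R →+* R') {d : ℕ}
    (x : Fin d → R) (a : Option (Fin d)) : φ (hat x a) = hat (fun i => φ (x i)) a := by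
  rcases a with _ | a <;> simp [hat]

lemma qfam_map {R R' U : Type*} [CommRing R] [CommRing R'] (φ : R →+* R') {d : ℕ} (u0 u1 : U)
    (t : U → Fin d → R) (o : Option U) (e : Sym2 (Option (Fin d))) :
    φ (qfam u0 u1 t o e) = qfam u0 u1 (fun u i => φ (t u i)) o e := by
  induction e with | _ a b =>
  rcases o with _ | o <;> simp [qfam, qsq, sprod, hat_map φ]

lemma br_indep (d k : ℕ) (hd : 4 ≤ d) (p : BipV d k → Fin d → ℝ) (hp : Generic d p)
    (i0 i1 : Fin (d+2)) (h01 : i0 ≠ i1) (l : Fin (d+2) → ℝ) (m : Fin (d+3) → ℝ) (c : ℝ)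
    (h : ∀ α β, ∑ i, l i * (hat (p (xv d k i)) α * hat (p (xv d k i)) β)
      + ∑ j, m j * (hat (p (yv d k j)) α * hat (p (yv d k j)) β)
      + c * (hat (p (xv d k i0)) α * hat (p (xv d k i1)) β
        + hat (p (xv d k i1)) α * hat (p (xv d k i0)) β) = 0) :
    l = 0 ∧ m = 0 ∧ c = 0 := by
  classical
  obtain ⟨t, ht⟩ := exists_spec d hd (U := Fin (d+2) ⊕ Fin (d+3)) (by simp; omega)
    (Sum.inl i0) (Sum.inl i1) (by simpa using h01)
  have := generic_linInd (fun vi : BipV d k × Fin d => p vi.1 vi.2) hp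
    (qfam (Sum.inl i0) (Sum.inl i1) (fun (u : Fin (d+2) ⊕ Fin (d+3)) i =>
      MvPolynomial.X ((Sum.inl u : BipV d k), i)))
    (fun vi => Sum.elim t (fun _ _ => 0) vi.1 vi.2)
    (by simpa [qfam_map] using ht)
    (fun o => o.elim c (Sum.elim l m))
    (by
      intro e
      have hm : ∀ o, MvPolynomial.aeval (fun vi : BipV d k × Fin d => p vi.1 vi.2)
          (qfam (Sum.inl i0) (Sum.inl i1) (fun (u : Fin (d+2) ⊕ Fin (d+3)) i =>
      (MvPolynomial.X ((Sum.inl u : BipV d k), i) : MvPolynomial (BipV d k × Fin d) ℚ)) o e) =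
          qfam (Sum.inl i0) (Sum.inl i1) (fun (u : Fin (d+2) ⊕ Fin (d+3)) i =>
            p (Sum.inl u) i) o e := by
        intro o
        have := qfam_map (MvPolynomial.aeval (R := ℚ)
          (fun vi : BipV d k × Fin d => p vi.1 vi.2)).toRingHom (Sum.inl i0) (Sum.inl i1)
          (fun (u : Fin (d+2) ⊕ Fin (d+3)) i => MvPolynomial.X ((Sum.inl u : BipV d k), i)) o e
        simpa using this
      simp only [hm, Fintype.sum_option, Fintype.sum_sum_type]
      induction e with | _ a b =>
      have := h a b
      simp only [xv, yv] at this
      simp [qfam, qsq, sprod]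
      linarith)
  refine ⟨?_, ?_, ?_⟩
  · ext i
    simpa using congrFun this (some (Sum.inl i))
  · ext i
    simpa using congrFun this (some (Sum.inr i))
  · simpa using congrFun this none

def GenPos {ι : Type*} [Fintype ι] {d : ℕ} (h : ι → Option (Fin d) → ℝ) : Prop :=
  ∀ c : ι → ℝ, (∀ α, ∑ i, c i * h i α = 0) → ∀ P : Finset ι, P.card ≤ d + 1 →
    (∀ i, i ∉ P → c i = 0) → c = 0

lemma genPos_of {V ι : Type*} [Fintype ι] {d : ℕ} (p : V → Fin d → ℝ)
    (hp : Generic d p) (f : ι → V) (hf : Function.Injective f) (hι : d + 1 ≤ Fintype.card ι) :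
    GenPos (fun i => hat (p (f i))) := by
  classical
  intro c hc P0 hP0 hcP
  obtain ⟨P, hPP, hP⟩ := Finset.exists_superset_card_eq hP0 hι
  have g : Option (Fin d) ≃ P := Fintype.equivOfCardEq (by simp [hP])
  have := generic_linInd (fun vi : V × Fin d => p vi.1 vi.2) hp
    (fun α : Option (Fin d) => hat (fun i => MvPolynomial.X (f (g α), i)))
    (fun vi => if vi.1 = f (g (some vi.2)) then 1 else 0)
    (by
      rw [Fintype.linearIndependent_iff]
      intro q hq
      have hs : ∀ i, q (some i) = 0 := by
        intro i
        have := congrFun hq (some i)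
        simpa [hat, Finset.sum_apply, hf.eq_iff, Subtype.ext_iff.symm] using this
      have hn := congrFun hq none
      rintro (_ | i)
      · simpa [hat, hs, Fintype.sum_option] using hn
      · exact hs i)
    (fun α => c (g α))
    (by
      intro β
      have h1 : ∀ α, MvPolynomial.aeval (fun vi : V × Fin d => p vi.1 vi.2)
          (hat (fun i => (MvPolynomial.X ((f (g α) : V), i) : MvPolynomial (V × Fin d) ℚ)) β)
          = hat (p (f (g α))) β := by
        intro α
        rcases β with _ | β <;> simp [hat]
      simp only [h1]
      rw [g.sum_comp (fun x : P => c x * hat (p (f x)) β), ← hc β]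
      rw [Finset.sum_coe_sort P (fun x => c x * hat (p (f x)) β)]
      apply Finset.sum_subset (Finset.subset_univ _)
      intro x _ hx
      rw [hcP x (fun h => hx (hPP h)), zero_mul])
  ext i
  by_cases hi : i ∈ P
  · simpa using congrFun this (g.symm ⟨i, hi⟩)
  · exact hcP i (fun h => hi (hPP h))

lemma GenPos.span {ι : Type*} [Fintype ι] {d : ℕ} {h : ι → Option (Fin d) → ℝ}
    (hg : GenPos h) (P : Finset ι) (hP : d + 1 ≤ P.card) (v : Option (Fin d) → ℝ) :
    ∃ c : ι → ℝ, (∀ i, i ∉ P → c i = 0) ∧ ∀ α, ∑ i, c i * h i α = v α := by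
  classical
  obtain ⟨Q, hQP, hQ⟩ := Finset.exists_subset_card_eq hP
  have hext : ∀ c : Q → ℝ, ∀ α, ∑ i, (if hi : i ∈ Q then c ⟨i, hi⟩ else 0) * h i α
      = ∑ i : Q, c i * h i α := by
    intro c α
    rw [← Finset.sum_subset (Finset.subset_univ Q)
      (by intro x _ hx; simp [hx]), ← Finset.sum_coe_sort]
    apply Finset.sum_congr rfl
    intro x _
    simp
  have hinj : Function.Injective (Fintype.linearCombination ℝ (fun i : Q => h i)) := by
    rw [← LinearMap.ker_eq_bot, LinearMap.ker_eq_bot']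
    intro c hc
    have := hg (fun i => if hi : i ∈ Q then c ⟨i, hi⟩ else 0)
      (by
        intro α
        rw [hext]
        have := congrFun hc α
        simpa [Fintype.linearCombination_apply, Finset.sum_apply] using this) Q hQ.le
      (by intro i hi; simp [hi])
    ext i
    simpa using congrFun this i
  have hsurj := (LinearMap.injective_iff_surjective_of_finrank_eq_finrank
    (by simp [hQ])).1 hinj
  obtain ⟨c, hc⟩ := hsurj v
  refine ⟨fun i => if hi : i ∈ Q then c ⟨i, hi⟩ else 0, ?_, ?_⟩
  · intro i hi
    exact dif_neg (fun h => hi (hQP h))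
  · intro α
    rw [hext, ← hc]
    simp [Fintype.linearCombination_apply, Finset.sum_apply]

lemma GenPos.exists_dep {ι : Type*} [Fintype ι] [DecidableEq ι] {d : ℕ}
    {h : ι → Option (Fin d) → ℝ}
    (hg : GenPos h) (S : Finset ι) (hS : d + 2 ≤ S.card) (j : ι) (hj : j ∈ S) :
    ∃ c : ι → ℝ, (∀ i, i ∉ S → c i = 0) ∧ (∀ α, ∑ i, c i * h i α = 0) ∧ c j = 1 := by
  obtain ⟨c, hc, hc2⟩ := hg.span (S.erase j) (by rw [Finset.card_erase_of_mem hj]; omega) (h j)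
  refine ⟨fun i => (if i = j then 1 else 0) - c i, ?_, ?_, ?_⟩
  · intro i hi
    have : i ≠ j := by rintro rfl; exact hi hj
    simp [this, hc i (fun h => hi (Finset.mem_of_mem_erase h))]
  · intro α
    simp [sub_mul, Finset.sum_sub_distrib, hc2]
  · simp [hc j (by simp)]

lemma GenPos.dep {ι : Type*} [Fintype ι] [DecidableEq ι] {d : ℕ} {h : ι → Option (Fin d) → ℝ}
    (hg : GenPos h) (hι : Fintype.card ι = d + 2) :
    ∃ a : ι → ℝ, (∀ i, a i ≠ 0) ∧ (∀ α, ∑ i, a i * h i α = 0) ∧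
      ∀ c : ι → ℝ, (∀ α, ∑ i, c i * h i α = 0) → ∃ t : ℝ, ∀ i, c i = t * a i := by
  have hne : Nonempty ι := Fintype.card_pos_iff.1 (by omega)
  obtain ⟨j⟩ := hne
  obtain ⟨a, -, ha, haj⟩ := hg.exists_dep Finset.univ (by simp [hι]) j (by simp)
  refine ⟨a, ?_, ha, ?_⟩
  · intro i hi
    have := hg a ha (Finset.univ.erase i) (by simp [Finset.card_erase_of_mem, hι])
      (by intro x hx; simp at hx; rwa [hx])
    rw [this] at haj
    simp at haj
  · intro c hc
    refine ⟨c j, ?_⟩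
    have := hg (fun i => c i - c j * a i)
      (by intro α; simp [sub_mul, Finset.sum_sub_distrib, hc, mul_assoc, ← Finset.mul_sum, ha])
      (Finset.univ.erase j) (by simp [Finset.card_erase_of_mem, hι])
      (by intro x hx; simp at hx; simp [hx, haj])
    intro i
    have := congrFun this i
    simp at this
    linarith

/-! ### Stresses -/

def Str (d : ℕ) {V : Type*} [Fintype V] [DecidableEq V] (p : V → Fin d → ℝ)
    (F : Set (Sym2 V)) : Submodule ℝ (Sym2 V → ℝ) where
  carrier := {ω | (∀ e, e ∉ F → ω e = 0) ∧ ∑ e, ω e • rigRow d p e = 0}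
  add_mem' := by
    rintro a b ⟨ha, ha'⟩ ⟨hb, hb'⟩
    refine ⟨fun e he => by simp [ha e he, hb e he], ?_⟩
    simp [add_smul, Finset.sum_add_distrib, ha', hb']
  zero_mem' := by simp
  smul_mem' := by
    rintro c a ⟨ha, ha'⟩
    refine ⟨fun e he => by simp [ha e he], ?_⟩
    simp [mul_smul, ← Finset.smul_sum, ha']

section Rank
variable {d : ℕ} {V : Type*} [Fintype V] [DecidableEq V] (p : V → Fin d → ℝ)

lemma mem_span_rows (F : Set (Sym2 V)) (v : V × Fin d → ℝ) :
    v ∈ Submodule.span ℝ (rigRow d p '' F) ↔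
      ∃ c : Sym2 V → ℝ, (∀ e, e ∉ F → c e = 0) ∧ ∑ e, c e • rigRow d p e = v := by
  constructor
  · intro h
    rw [Finsupp.mem_span_image_iff_linearCombination] at h
    obtain ⟨l, hl, rfl⟩ := h
    refine ⟨l, ?_, ?_⟩
    · intro e he
      exact (Finsupp.mem_supported' ℝ l).1 hl e he
    · rw [Finsupp.linearCombination_apply, Finsupp.sum_fintype]
      simp
  · rintro ⟨c, hc, rfl⟩
    refine Submodule.sum_mem _ fun e _ => ?_
    by_cases he : e ∈ F
    · exact Submodule.smul_mem _ _ (Submodule.subset_span ⟨e, he, rfl⟩)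
    · simp [hc e he]

lemma rrk_add_finrank (F : Finset (Sym2 V)) :
    rrk d p ↑F + Module.finrank ℝ (Str d p ↑F) = F.card := by
  classical
  let L : (F → ℝ) →ₗ[ℝ] (V × Fin d → ℝ) := Fintype.linearCombination ℝ (fun e : F => rigRow d p e)
  have h1 := LinearMap.finrank_range_add_finrank_ker L
  have h2 : LinearMap.range L = Submodule.span ℝ (rigRow d p '' F) := by
    rw [Fintype.range_linearCombination]
    congr 1
    ext v
    simp
  let X : (F → ℝ) →ₗ[ℝ] (Sym2 V → ℝ) :=
    { toFun := fun c e => if he : e ∈ F then c ⟨e, he⟩ else 0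
      map_add' := by intro a b; ext e; by_cases he : e ∈ F <;> simp [he]
      map_smul' := by intro a b; ext e; by_cases he : e ∈ F <;> simp [he] }
  have hX : Function.Injective X := by
    intro a b hab
    ext e
    have := congrFun hab e
    simpa [X] using this
  have hXL : ∀ c : F → ℝ, ∑ e, X c e • rigRow d p e = L c := by
    intro c
    rw [← Finset.sum_subset (Finset.subset_univ F)
      (by intro x _ hx; simp [X, hx]), ← Finset.sum_coe_sort]
    simp only [L, Fintype.linearCombination_apply]
    apply Finset.sum_congr rfl
    intro x _
    simp [X]
  have h3 : (LinearMap.ker L).map X = Str d p ↑F := by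
    ext ω
    simp only [Submodule.mem_map, LinearMap.mem_ker]
    constructor
    · rintro ⟨c, hc, rfl⟩
      exact ⟨fun e he => by simp at he; simp [X, he], by rw [hXL, hc]⟩
    · rintro ⟨h, h'⟩
      have : X (fun e => ω e) = ω := by
        ext e
        by_cases he : e ∈ F
        · simp [X, he]
        · simp [X, he, h e (by simpa using he)]
      exact ⟨fun e => ω e, by rw [← hXL, this]; exact h', this⟩
  rw [rrk, ← h2, ← h3, ← (Submodule.equivMapOfInjective X hX _).finrank_eq, h1]
  simp

lemma rrk_eq_iff (F G : Set (Sym2 V)) (h : F ⊆ G) :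
    rrk d p F = rrk d p G ↔ ∀ e ∈ G, rigRow d p e ∈ Submodule.span ℝ (rigRow d p '' F) := by
  have hle : Submodule.span ℝ (rigRow d p '' F) ≤ Submodule.span ℝ (rigRow d p '' G) :=
    Submodule.span_mono (Set.image_mono h)
  constructor
  · intro hr e he
    rw [Submodule.eq_of_le_of_finrank_eq hle hr]
    exact Submodule.subset_span ⟨e, he, rfl⟩
  · intro hr
    have : Submodule.span ℝ (rigRow d p '' F) = Submodule.span ℝ (rigRow d p '' G) := by
      apply le_antisymm hle
      rw [Submodule.span_le]
      rintro _ ⟨e, he, rfl⟩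
      exact hr e he
    rw [rrk, rrk, this]

lemma noncoloop_iff (F : Set (Sym2 V)) (f : Sym2 V) (hf : f ∈ F) :
    rrk d p (F \ {f}) = rrk d p F ↔ ∃ ω ∈ Str d p F, ω f ≠ 0 := by
  classical
  rw [rrk_eq_iff p _ _ Set.sdiff_subset]
  constructor
  · intro h
    obtain ⟨c, hc, hc2⟩ := (mem_span_rows p _ _).1 (h f hf)
    refine ⟨fun e => c e - if e = f then 1 else 0, ⟨?_, ?_⟩, ?_⟩
    · intro e he
      have : e ≠ f := by rintro rfl; exact he hf
      simp [this, hc e (fun h => he h.1)]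
    · simp [sub_smul, Finset.sum_sub_distrib, hc2]
    · simp [hc f (by simp)]
  · rintro ⟨ω, ⟨h1, h2⟩, hω⟩ e he
    by_cases hef : e = f
    · subst hef
      rw [mem_span_rows]
      refine ⟨fun x => (if x = e then 1 else 0) - (ω e)⁻¹ * ω x, ?_, ?_⟩
      · intro x hx
        by_cases hxe : x = e
        · subst hxe
          simp [hω]
        · simp [hxe, h1 x (fun h => hx ⟨h, hxe⟩)]
      · simp [sub_smul, Finset.sum_sub_distrib, mul_smul, ← Finset.smul_sum, h2]
    · exact Submodule.subset_span ⟨e, ⟨he, hef⟩, rfl⟩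

lemma rcl_stress (F : Set (Sym2 V)) (f : Sym2 V) (hf : f ∈ rcl d p F) (hfF : f ∉ F) :
    ∃ ω ∈ Str d p (insert f F), ω f ≠ 0 := by
  rw [← noncoloop_iff p _ _ (Set.mem_insert f F), hf.2]
  congr 1
  ext x
  simp
  rintro h rfl
  exact hfF h

lemma rigRow_eq (e : Sym2 V) (w : V) (i : Fin d) :
    rigRow d p e (w, i) = ∑ u, if e = s(w, u) then p w i - p u i else 0 := by
  induction e with | _ a b =>
  simp only [rigRow, Sym2.lift_mk]
  by_cases hab : a = b
  · subst hab
    rw [sub_self, zero_mul]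
    symm
    apply Finset.sum_eq_zero
    intro u _
    split_ifs with h
    · simp only [Sym2.eq_iff] at h
      rcases h with ⟨rfl, rfl⟩ | ⟨rfl, rfl⟩ <;> simp
    · rfl
  · by_cases hwa : w = a
    · subst hwa
      have : ∀ u, (s(w, b) = s(w, u)) ↔ b = u := by
        intro u; simp; grind
      simp [this, hab]
    · by_cases hwb : w = b
      · subst hwb
        have : ∀ u, (s(a, w) = s(w, u)) ↔ a = u := by
          intro u; rw [Sym2.eq_swap]; simp; grind
        simp [this, hwa]
      · have : ∀ u, ¬ (s(a, b) = s(w, u)) := by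
          intro u
          simp only [Sym2.eq_iff]
          rintro (⟨rfl, -⟩ | ⟨-, rfl⟩)
          · exact hwa rfl
          · exact hwb rfl
        simp [this, hwa, hwb]

lemma sum_rows (ω : Sym2 V → ℝ) (w : V) (i : Fin d) :
    (∑ e, ω e • rigRow d p e) (w, i) = ∑ u, ω s(w, u) * (p w i - p u i) := by
  simp only [Finset.sum_apply, Pi.smul_apply, smul_eq_mul, rigRow_eq, Finset.mul_sum]
  rw [Finset.sum_comm]
  apply Finset.sum_congr rfl
  intro u _
  simp

lemma stress_hat {F : Set (Sym2 V)} {ω : Sym2 V → ℝ} (h : ω ∈ Str d p F) (w : V)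
    (α : Option (Fin d)) :
    ∑ u, ω s(w, u) * hat (p u) α = (∑ u, ω s(w, u)) * hat (p w) α := by
  rcases α with _ | i
  · simp [hat]
  · have := congrFun h.2 (w, i)
    rw [sum_rows] at this
    simp only [mul_sub, Finset.sum_sub_distrib, Pi.zero_apply] at this
    rw [Finset.sum_mul]
    simp only [hat]
    linarith

lemma notMem_rcl (hd : 0 < d) (hp : Generic d p) (F : Set (Sym2 V)) (w : V) (e : Sym2 V)
    (hw : w ∈ e) (hF : ∀ f ∈ F, w ∉ f) : e ∉ rcl d p F := by
  intro he
  have hdiag := he.1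
  have hc := (rrk_eq_iff p F (insert e F) (Set.subset_insert _ _)).1 he.2.symm e (by simp)
  obtain ⟨c, hc1, hc2⟩ := (mem_span_rows p _ _).1 hc
  obtain ⟨u, rfl⟩ := hw
  have hwu : w ≠ u := by simpa using hdiag
  have h1 := congrFun hc2 (w, ⟨0, hd⟩)
  rw [sum_rows] at h1
  rw [Finset.sum_eq_zero] at h1
  · simp [rigRow, hwu] at h1
    have := hp.injective (a₁ := (w, ⟨0, hd⟩)) (a₂ := (u, ⟨0, hd⟩)) (by simp; linarith)
    simp at this
    exact hwu this
  · intro x _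
    rw [hc1 _ (fun h => hF _ h (by simp)), zero_mul]

end Rank

/-! ### The graphs in question -/

section Bip
open Classical in
/-- all edges between `X` and `y_j`, `j ∈ S`, and the cliques indexed by `T` -/
noncomputable def bipST (d k : ℕ) (S : Finset (Fin (d+3))) (T : Finset (Fin (k-2))) :
    Finset (Sym2 (BipV d k)) :=
  Finset.univ.filter fun e => (∃ i, ∃ j ∈ S, e = s(xv d k i, yv d k j)) ∨
    ∃ c ∈ T, ∃ a b, a ≠ b ∧ e = s(zv d k c a, zv d k c b)

variable {d k : ℕ} {S : Finset (Fin (d+3))} {T : Finset (Fin (k-2))}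

lemma mem_bipST {e : Sym2 (BipV d k)} : e ∈ bipST d k S T ↔
    (∃ i, ∃ j ∈ S, e = s(xv d k i, yv d k j)) ∨
    ∃ c ∈ T, ∃ a b, a ≠ b ∧ e = s(zv d k c a, zv d k c b) := by
  simp [bipST]

@[simp] lemma bipST_xx (i i') : s(xv d k i, xv d k i') ∉ bipST d k S T := by
  simp [mem_bipST, xv, yv, zv]
@[simp] lemma bipST_yy (i i') : s(yv d k i, yv d k i') ∉ bipST d k S T := by
  simp [mem_bipST, xv, yv, zv]
@[simp] lemma bipST_xy (i j) : s(xv d k i, yv d k j) ∈ bipST d k S T ↔ j ∈ S := by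
  simp [mem_bipST, xv, yv, zv]
@[simp] lemma bipST_yx (i j) : s(yv d k j, xv d k i) ∈ bipST d k S T ↔ j ∈ S := by
  simp [mem_bipST, xv, yv, zv]
@[simp] lemma bipST_xz (i c a) : s(xv d k i, zv d k c a) ∉ bipST d k S T := by
  simp [mem_bipST, xv, yv, zv]
@[simp] lemma bipST_yz (i c a) : s(yv d k i, zv d k c a) ∉ bipST d k S T := by
  simp [mem_bipST, xv, yv, zv]
@[simp] lemma bipST_zx (i c a) : s(zv d k c a, xv d k i) ∉ bipST d k S T := by
  simp [mem_bipST, xv, yv, zv]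
@[simp] lemma bipST_zy (i c a) : s(zv d k c a, yv d k i) ∉ bipST d k S T := by
  simp [mem_bipST, xv, yv, zv]
@[simp] lemma bipST_zz (c a c' a') : s(zv d k c a, zv d k c' a') ∈ bipST d k S T ↔
    c = c' ∧ c ∈ T ∧ a ≠ a' := by
  simp [mem_bipST, xv, yv, zv]
  constructor
  · grind
  · rintro ⟨h1, h2, h3⟩
    exact ⟨c, h2, a, a', h3, Or.inl ⟨⟨rfl, rfl⟩, h1.symm, rfl⟩⟩

lemma bip_sum (f : BipV d k → ℝ) :
    ∑ u, f u = ∑ i, f (xv d k i) + ∑ j, f (yv d k j) + ∑ c, ∑ a, f (zv d k c a) := by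
  simp [Fintype.sum_sum_type, Fintype.sum_prod_type, xv, yv, zv]

lemma bip_cases {P : BipV d k → Prop} (u : BipV d k) (hx : ∀ i, P (xv d k i))
    (hy : ∀ j, P (yv d k j)) (hz : ∀ c a, P (zv d k c a)) : P u := by
  rcases u with (i | j) | ⟨c, a⟩
  · exact hx i
  · exact hy j
  · exact hz c a

lemma bipST_ext {F G : Finset (Sym2 (BipV d k))}
    (hxx : ∀ i i', s(xv d k i, xv d k i') ∈ F ↔ s(xv d k i, xv d k i') ∈ G)
    (hxy : ∀ i i', s(xv d k i, yv d k i') ∈ F ↔ s(xv d k i, yv d k i') ∈ G)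
    (hyy : ∀ i i', s(yv d k i, yv d k i') ∈ F ↔ s(yv d k i, yv d k i') ∈ G)
    (hxz : ∀ i c a, s(xv d k i, zv d k c a) ∈ F ↔ s(xv d k i, zv d k c a) ∈ G)
    (hyz : ∀ i c a, s(yv d k i, zv d k c a) ∈ F ↔ s(yv d k i, zv d k c a) ∈ G)
    (hzz : ∀ c a c' a', s(zv d k c a, zv d k c' a') ∈ F ↔ s(zv d k c a, zv d k c' a') ∈ G) :
    F = G := by
  ext e
  induction e with | _ u v =>
  induction u using bip_cases with
  | hx i =>
    induction v using bip_cases with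
    | hx j => exact hxx _ _
    | hy j => exact hxy _ _
    | hz c a => exact hxz _ _ _
  | hy i =>
    induction v using bip_cases with
    | hx j => rw [Sym2.eq_swap]; exact hxy _ _
    | hy j => exact hyy _ _
    | hz c a => exact hyz _ _ _
  | hz c a =>
    induction v using bip_cases with
    | hx j => rw [Sym2.eq_swap]; exact hxz _ _ _
    | hy j => rw [Sym2.eq_swap]; exact hyz _ _ _
    | hz c' a' => exact hzz _ _ _ _

lemma bip_eq : bipEdges d k = bipST d k Finset.univ ∅ := by
  apply bipST_ext <;> intros <;> simp <;> simp [bipEdges, xv, yv, zv]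

lemma bipZ_eq : bipEdges d k ∪ cliqueEdgesZ d k = bipST d k Finset.univ Finset.univ := by
  apply bipST_ext <;> intros <;> simp <;> simp [bipEdges, cliqueEdgesZ, xv, yv, zv]
  rename_i c a c' a'
  constructor
  · grind
  · rintro ⟨h1, h2⟩
    exact ⟨c, a, a', h2, Or.inl ⟨⟨rfl, rfl⟩, h1, rfl⟩⟩

lemma bipST_sdiff_star (j : Fin (d+3)) :
    bipST d k S T \ starAt d k j = bipST d k (S.erase j) T := by
  apply bipST_ext <;> intros <;> simp <;> simp [starAt, xv, yv, zv]
  grind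

lemma bipST_sdiff_clique (c : Fin (k-2)) :
    bipST d k S T \ bipST d k ∅ {c} = bipST d k S (T.erase c) := by
  apply bipST_ext <;> intros <;> simp
  grind

lemma star_eq (j : Fin (d+3)) : starAt d k j = bipST d k {j} ∅ := by
  apply bipST_ext <;> intros <;> simp <;> simp [starAt, xv, yv, zv]
  exact eq_comm

/-- Bolker–Roth: stresses on `K_{d+2,d+3}` plus possibly one edge inside `X`. -/
lemma bolker_roth (hd : 4 ≤ d) (p : BipV d k → Fin d → ℝ) (hp : Generic d p)
    (i0 i1 : Fin (d+2)) (h01 : i0 ≠ i1) (ω : Sym2 (BipV d k) → ℝ)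
    (hω : ω ∈ Str d p (insert s(xv d k i0, xv d k i1) ↑(bipST d k S T))) :
    ω s(xv d k i0, xv d k i1) = 0 ∧
    (∀ i α, ∑ j, ω s(xv d k i, yv d k j) * hat (p (yv d k j)) α = 0) ∧
    (∀ j α, ∑ i, ω s(xv d k i, yv d k j) * hat (p (xv d k i)) α = 0) := by
  classical
  set w := ω s(xv d k i0, xv d k i1) with hw
  have hxz : ∀ i c a, ω s(xv d k i, zv d k c a) = 0 := fun i c a => hω.1 _ (by
    simp; simp [xv, yv, zv])
  have hyz : ∀ i c a, ω s(yv d k i, zv d k c a) = 0 := fun i c a => hω.1 _ (by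
    simp; simp [xv, yv, zv])
  have hyy : ∀ i j, ω s(yv d k i, yv d k j) = 0 := fun i c => hω.1 _ (by
    simp; simp [xv, yv, zv])
  have hyx : ∀ i j, ω s(yv d k j, xv d k i) = ω s(xv d k i, yv d k j) := by
    intro i j; rw [Sym2.eq_swap]
  have hxx : ∀ i i', ω s(xv d k i, xv d k i') =
      (if i = i0 then (if i' = i1 then w else 0) else 0)
        + (if i = i1 then (if i' = i0 then w else 0) else 0) := by
    intro i i'
    by_cases h : s(xv d k i, xv d k i') = s(xv d k i0, xv d k i1)
    · rw [h, ← hw]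
      simp [xv] at h
      grind
    · rw [hω.1 _ (by simp [h])]
      simp [xv] at h
      grind
  have hX : ∀ i α, ∑ i', ω s(xv d k i, xv d k i') * hat (p (xv d k i')) α
      + ∑ j, ω s(xv d k i, yv d k j) * hat (p (yv d k j)) α
      = (∑ u, ω s(xv d k i, u)) * hat (p (xv d k i)) α := by
    intro i α
    rw [← stress_hat p hω, bip_sum]
    simp [hxz]
  have hY : ∀ j α, ∑ i, ω s(xv d k i, yv d k j) * hat (p (xv d k i)) α
      = (∑ u, ω s(yv d k j, u)) * hat (p (yv d k j)) α := by
    intro j α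
    rw [← stress_hat p hω, bip_sum]
    simp [hyz, hyy, hyx]
  have hsum : ∀ i α, ∑ i', ω s(xv d k i, xv d k i') * hat (p (xv d k i')) α
      = (if i = i0 then w * hat (p (xv d k i1)) α else 0)
        + (if i = i1 then w * hat (p (xv d k i0)) α else 0) := by
    intro i α
    simp only [hxx, add_mul, Finset.sum_add_distrib]
    congr 1 <;> split_ifs <;> simp
  obtain ⟨hl, hm, hc⟩ := br_indep d k hd p hp i0 i1 h01
    (fun i => ∑ u, ω s(xv d k i, u)) (fun j => - ∑ u, ω s(yv d k j, u)) (- w) (by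
      intro α β
      have e1 : ∑ i, (∑ u, ω s(xv d k i, u)) * (hat (p (xv d k i)) α * hat (p (xv d k i)) β)
        = ∑ i, hat (p (xv d k i)) α *
            ∑ i', ω s(xv d k i, xv d k i') * hat (p (xv d k i')) β
          + ∑ i, hat (p (xv d k i)) α * ∑ j, ω s(xv d k i, yv d k j) * hat (p (yv d k j)) β := by
        rw [← Finset.sum_add_distrib]
        apply Finset.sum_congr rfl
        intro i _
        rw [← mul_add, hX]
        ring
      have e2 : ∑ j, (- ∑ u, ω s(yv d k j, u)) * (hat (p (yv d k j)) α * hat (p (yv d k j)) β)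
        = - ∑ j, hat (p (yv d k j)) β * ∑ i, ω s(xv d k i, yv d k j) * hat (p (xv d k i)) α := by
        rw [← Finset.sum_neg_distrib]
        apply Finset.sum_congr rfl
        intro j _
        rw [hY]
        ring
      have e3 : ∑ i, hat (p (xv d k i)) α * ∑ j, ω s(xv d k i, yv d k j) * hat (p (yv d k j)) β
        = ∑ j, hat (p (yv d k j)) β * ∑ i, ω s(xv d k i, yv d k j) * hat (p (xv d k i)) α := by
        simp only [Finset.mul_sum]
        rw [Finset.sum_comm]
        apply Finset.sum_congr rfl
        intro j _
        apply Finset.sum_congr rfl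
        intro i _
        ring
      rw [e1, e2, e3]
      simp only [hsum, mul_add, Finset.sum_add_distrib]
      simp
      ring)
  have hw0 : w = 0 := by linarith
  refine ⟨hw0, ?_, ?_⟩
  · intro i α
    have := hX i α
    rw [hsum, congrFun hl i] at this
    simpa [hw0] using this
  · intro j α
    rw [hY]
    have := congrFun hm j
    simp only [Pi.zero_apply, neg_eq_zero] at this
    rw [this, zero_mul]

lemma xx_notMem_rcl (hd : 4 ≤ d) (p : BipV d k → Fin d → ℝ) (hp : Generic d p)
    (i0 i1 : Fin (d+2)) : s(xv d k i0, xv d k i1) ∉ rcl d p ↑(bipST d k S T) := by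
  intro h
  have h01 : i0 ≠ i1 := by
    rintro rfl
    exact h.1 (by simp)
  obtain ⟨ω, hω, hω2⟩ := rcl_stress p _ _ h (by simp)
  exact hω2 (bolker_roth hd p hp i0 i1 h01 ω hω).1

/-- stress of a single clique -/
lemma clique_stress (p : BipV d k → Fin d → ℝ)
    (ω : Sym2 (BipV d k) → ℝ) (hω : ω ∈ Str d p ↑(bipST d k S T)) (c : Fin (k-2))
    (g : Fin (d+2) → ℝ) (hg0 : ∀ a, g a ≠ 0)
    (hg : ∀ f : Fin (d+2) → ℝ, (∀ α, ∑ a, f a * hat (p (zv d k c a)) α = 0) →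
      ∃ t : ℝ, ∀ a, f a = t * g a) :
    ∃ t : ℝ, ∀ a b, a ≠ b → ω s(zv d k c a, zv d k c b) = t * g a * g b := by
  classical
  set W : Fin (d+2) → Fin (d+2) → ℝ := fun a b =>
    ω s(zv d k c a, zv d k c b) - if a = b then ∑ u, ω s(zv d k c a, u) else 0 with hW
  have hWs : ∀ a b, W a b = W b a := by
    intro a b
    by_cases h : a = b
    · rw [h]
    · simp [hW, h, Ne.symm h, Sym2.eq_swap]
  have h1 : ∀ a, ∃ t : ℝ, ∀ b, W a b = t * g b := by
    intro a
    apply hg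
    intro α
    have h2 := stress_hat p hω (zv d k c a) α
    rw [bip_sum] at h2
    have hzx : ∀ i, ω s(zv d k c a, xv d k i) = 0 := fun i => hω.1 _ (by simp)
    have hzy : ∀ i, ω s(zv d k c a, yv d k i) = 0 := fun i => hω.1 _ (by simp)
    have hzz : ∀ c', c' ≠ c → ∀ b, ω s(zv d k c a, zv d k c' b) = 0 :=
      fun c' hc' b => hω.1 _ (by simp [hc'.symm])
    rw [Finset.sum_eq_single (a := c) (by
      intro c' _ hc'
      simp [hzz c' hc']) (by simp)] at h2
    simp only [hzx, hzy, zero_mul, Finset.sum_const_zero, zero_add] at h2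
    simp only [hW, sub_mul, Finset.sum_sub_distrib, h2]
    simp
  choose t ht using h1
  let a0 : Fin (d+2) := 0
  refine ⟨t a0 / g a0, ?_⟩
  intro a b hab
  have h3 : ω s(zv d k c a, zv d k c b) = W a b := by simp [hW, hab]
  have h4 : t a = t a0 / g a0 * g a := by
    have := hWs a a0
    rw [ht, ht] at this
    have := hg0 a0
    field_simp
    linarith
  rw [h3, ht, h4]

lemma sym_cases {P : Sym2 (BipV d k) → Prop}
    (hxx : ∀ i i', P s(xv d k i, xv d k i'))
    (hxy : ∀ i i', P s(xv d k i, yv d k i'))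
    (hyy : ∀ i i', P s(yv d k i, yv d k i'))
    (hxz : ∀ i c a, P s(xv d k i, zv d k c a))
    (hyz : ∀ i c a, P s(yv d k i, zv d k c a))
    (hzz : ∀ c a c' a', P s(zv d k c a, zv d k c' a')) (e : Sym2 (BipV d k)) : P e := by
  induction e with | _ u v =>
  induction u using bip_cases with
  | hx i =>
    induction v using bip_cases with
    | hx j => exact hxx _ _
    | hy j => exact hxy _ _
    | hz c a => exact hxz _ _ _
  | hy i =>
    induction v using bip_cases with
    | hx j => rw [Sym2.eq_swap]; exact hxy _ _
    | hy j => exact hyy _ _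
    | hz c a => exact hyz _ _ _
  | hz c a =>
    induction v using bip_cases with
    | hx j => rw [Sym2.eq_swap]; exact hxz _ _ _
    | hy j => rw [Sym2.eq_swap]; exact hyz _ _ _
    | hz c' a' => exact hzz _ _ _ _

def psiFun (a : Fin (d+2) → ℝ) (g : Fin (k-2) → Fin (d+2) → ℝ)
    (b : Fin (d+3) → ℝ) (t : Fin (k-2) → ℝ) : BipV d k → BipV d k → ℝ
  | Sum.inl (Sum.inl i), Sum.inl (Sum.inr j) => a i * b j
  | Sum.inl (Sum.inr j), Sum.inl (Sum.inl i) => a i * b j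
  | Sum.inr (c, x), Sum.inr (c', y) => if c = c' ∧ x ≠ y then t c * g c x * g c y else 0
  | Sum.inl (Sum.inl _), Sum.inl (Sum.inl _) => 0
  | Sum.inl (Sum.inr _), Sum.inl (Sum.inr _) => 0
  | Sum.inl _, Sum.inr _ => 0
  | Sum.inr _, Sum.inl _ => 0

lemma psiFun_comm (a : Fin (d+2) → ℝ) (g : Fin (k-2) → Fin (d+2) → ℝ)
    (b : Fin (d+3) → ℝ) (t : Fin (k-2) → ℝ) (u v : BipV d k) :
    psiFun a g b t u v = psiFun a g b t v u := by
  rcases u with (i | j) | ⟨c, x⟩ <;> rcases v with (i' | j') | ⟨c', x'⟩ <;> simp only [psiFun]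
  by_cases h : c = c'
  · subst h
    by_cases hx : x = x'
    · subst hx
      rfl
    · simp only [hx, Ne.symm hx, ne_eq, not_false_eq_true, and_true, if_true]
      ring
  · simp [h, Ne.symm h]

def psi (a : Fin (d+2) → ℝ) (g : Fin (k-2) → Fin (d+2) → ℝ) :
    ((Fin (d+3) → ℝ) × (Fin (k-2) → ℝ)) →ₗ[ℝ] (Sym2 (BipV d k) → ℝ) where
  toFun bt := Sym2.lift ⟨psiFun a g bt.1 bt.2, psiFun_comm a g bt.1 bt.2⟩
  map_add' := by
    rintro ⟨b, t⟩ ⟨b', t'⟩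
    ext e
    induction e using sym_cases <;> simp [xv, yv, zv, psiFun]
    · ring
    · split_ifs <;> ring
  map_smul' := by
    rintro r ⟨b, t⟩
    ext e
    induction e using sym_cases <;> simp [xv, yv, zv, psiFun]
    · ring
    · split_ifs <;> ring

section Psi
variable (a : Fin (d+2) → ℝ) (g : Fin (k-2) → Fin (d+2) → ℝ)
    (bt : (Fin (d+3) → ℝ) × (Fin (k-2) → ℝ))

@[simp] lemma psi_xx (i i') : psi a g bt s(xv d k i, xv d k i') = 0 := by
  simp [psi, psiFun, xv, yv, zv]
@[simp] lemma psi_yy (i i') : psi a g bt s(yv d k i, yv d k i') = 0 := by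
  simp [psi, psiFun, xv, yv, zv]
@[simp] lemma psi_xy (i j) : psi a g bt s(xv d k i, yv d k j) = a i * bt.1 j := by
  simp [psi, psiFun, xv, yv, zv]
@[simp] lemma psi_yx (i j) : psi a g bt s(yv d k j, xv d k i) = a i * bt.1 j := by
  simp [psi, psiFun, xv, yv, zv]
@[simp] lemma psi_xz (i c x) : psi a g bt s(xv d k i, zv d k c x) = 0 := by
  simp [psi, psiFun, xv, yv, zv]
@[simp] lemma psi_yz (i c x) : psi a g bt s(yv d k i, zv d k c x) = 0 := by
  simp [psi, psiFun, xv, yv, zv]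
@[simp] lemma psi_zx (i c x) : psi a g bt s(zv d k c x, xv d k i) = 0 := by
  simp [psi, psiFun, xv, yv, zv]
@[simp] lemma psi_zy (i c x) : psi a g bt s(zv d k c x, yv d k i) = 0 := by
  simp [psi, psiFun, xv, yv, zv]
@[simp] lemma psi_zz (c x c' x') : psi a g bt s(zv d k c x, zv d k c' x') =
    if c = c' ∧ x ≠ x' then bt.2 c * g c x * g c x' else 0 := by
  simp [psi, psiFun, xv, yv, zv]
end Psi

lemma psi_inj (a : Fin (d+2) → ℝ) (g : Fin (k-2) → Fin (d+2) → ℝ)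
    (ha : ∀ i, a i ≠ 0) (hg : ∀ c i, g c i ≠ 0) : Function.Injective (psi a g) := by
  rw [← LinearMap.ker_eq_bot, LinearMap.ker_eq_bot']
  rintro ⟨b, t⟩ h
  ext j
  · have := congrFun h s(xv d k 0, yv d k j)
    simpa [ha] using this
  · have := congrFun h s(zv d k j 0, zv d k j 1)
    simpa [hg] using this

lemma dep_aux {ι : Type*} [Fintype ι] (q : ι → Fin d → ℝ) (f : ι → ℝ)
    (hf : ∀ α, ∑ u, f u * hat (q u) α = 0) (r s : ℝ) (i : Fin d) :
    ∑ u, (r * f u) * (s - q u i) = 0 := by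
  have h1 := hf none
  have h2 := hf (some i)
  simp only [hat, mul_one] at h1 h2
  simp only [mul_sub, Finset.sum_sub_distrib, mul_assoc, ← Finset.mul_sum, h2]
  rw [← Finset.sum_mul, h1]
  simp

/-- the parameter map whose kernel parametrises the stresses -/
def Phi (p : BipV d k → Fin d → ℝ) (S : Finset (Fin (d+3))) (T : Finset (Fin (k-2))) :
    ((Fin (d+3) → ℝ) × (Fin (k-2) → ℝ)) →ₗ[ℝ]
      ((Option (Fin d) → ℝ) × ({j // j ∉ S} → ℝ) × ({c // c ∉ T} → ℝ)) where
  toFun bt := (fun α => ∑ j, bt.1 j * hat (p (yv d k j)) α, fun j => bt.1 j, fun c => bt.2 c)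
  map_add' := by
    intro x y
    ext <;> simp [add_mul, Finset.sum_add_distrib]
  map_smul' := by
    intro r x
    ext <;> simp [mul_assoc, Finset.mul_sum]

lemma mem_ker_Phi (p : BipV d k → Fin d → ℝ) (bt) : bt ∈ LinearMap.ker (Phi p S T) ↔
    (∀ α, ∑ j, bt.1 j * hat (p (yv d k j)) α = 0) ∧ (∀ j, j ∉ S → bt.1 j = 0) ∧
      ∀ c, c ∉ T → bt.2 c = 0 := by
  simp [Phi, LinearMap.mem_ker, Prod.ext_iff, funext_iff]

lemma finrank_ker_Phi (p : BipV d k → Fin d → ℝ) (hp : Generic d p) (hS : d + 1 ≤ S.card) :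
    Module.finrank ℝ (LinearMap.ker (Phi p S T)) + (d + 1) = S.card + T.card := by
  classical
  have hgp : GenPos (fun j => hat (p (yv d k j))) := genPos_of p hp (yv d k)
    (by intro x y h; simpa [yv] using h) (by simp)
  have hsurj : Function.Surjective (Phi p S T) := by
    rintro ⟨v, r, s⟩
    let b1 : Fin (d+3) → ℝ := fun j => if h : j ∉ S then r ⟨j, h⟩ else 0
    obtain ⟨b2, hb2, hb2'⟩ := hgp.span S hS
      (v - fun α => ∑ j, b1 j * hat (p (yv d k j)) α)
    refine ⟨(b1 + b2, fun c => if h : c ∉ T then s ⟨c, h⟩ else 0), ?_⟩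
    ext x
    · simp [Phi, add_mul, Finset.sum_add_distrib, hb2']
    · simp [Phi, b1, hb2 _ x.2, x.2]
    · simp [Phi, x.2]
  have h := LinearMap.finrank_range_add_finrank_ker (Phi p S T)
  rw [LinearMap.range_eq_top.2 hsurj, finrank_top] at h
  simp only [Module.finrank_prod, Module.finrank_fintype_fun_eq_card, Fintype.card_option,
    Fintype.card_fin, Fintype.card_subtype_compl, Fintype.card_coe] at h
  have h1 : S.card ≤ d + 3 := by simpa using Finset.card_le_univ S
  have h2 : T.card ≤ k - 2 := by simpa using Finset.card_le_univ T
  omega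

lemma Str_mono {V : Type*} [Fintype V] [DecidableEq V] (p : V → Fin d → ℝ)
    {F G : Set (Sym2 V)} (h : F ⊆ G) : Str d p F ≤ Str d p G :=
  fun _ hω => ⟨fun e he => hω.1 e (fun h' => he (h h')), hω.2⟩

lemma exists_ag (p : BipV d k → Fin d → ℝ) (hp : Generic d p) :
    ∃ (a : Fin (d+2) → ℝ) (g : Fin (k-2) → Fin (d+2) → ℝ),
      ((∀ i, a i ≠ 0) ∧ (∀ α, ∑ i, a i * hat (p (xv d k i)) α = 0) ∧
      ∀ c : Fin (d+2) → ℝ, (∀ α, ∑ i, c i * hat (p (xv d k i)) α = 0) →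
        ∃ t : ℝ, ∀ i, c i = t * a i) ∧
      ∀ z, (∀ i, g z i ≠ 0) ∧ (∀ α, ∑ i, g z i * hat (p (zv d k z i)) α = 0) ∧
      ∀ c : Fin (d+2) → ℝ, (∀ α, ∑ i, c i * hat (p (zv d k z i)) α = 0) →
        ∃ t : ℝ, ∀ i, c i = t * g z i := by
  obtain ⟨a, ha⟩ := (genPos_of p hp (xv d k) (by intro x y h; simpa [xv] using h)
    (by simp)).dep (by simp)
  have := fun z => (genPos_of p hp (zv d k z) (by intro x y h; simpa [zv] using h)
    (by simp)).dep (by simp)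
  choose g hg using this
  exact ⟨a, g, ha, hg⟩

lemma Str_eq (hd : 4 ≤ d) (p : BipV d k → Fin d → ℝ) (hp : Generic d p) :
    ∃ (a : Fin (d+2) → ℝ) (g : Fin (k-2) → Fin (d+2) → ℝ), (∀ i, a i ≠ 0) ∧ (∀ c i, g c i ≠ 0) ∧
      ∀ S T, Str d p ↑(bipST d k S T) = (LinearMap.ker (Phi p S T)).map (psi a g) := by
  classical
  obtain ⟨a, g, ⟨ha0, had, ha⟩, hg⟩ := exists_ag p hp
  refine ⟨a, g, ha0, fun c => (hg c).1, ?_⟩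
  intro S T
  ext ω
  rw [Submodule.mem_map]
  constructor
  · intro hω
    obtain ⟨-, hrow, hcol⟩ := bolker_roth (S := S) (T := T) hd p hp 0 1 (by simp) ω
      (Str_mono p (Set.subset_insert _ _) hω)
    choose b hb using fun j => ha _ (hcol j)
    choose t ht using fun c => clique_stress p ω hω c (g c) (hg c).1 (hg c).2.2
    refine ⟨(b, t), ?_, ?_⟩
    · rw [mem_ker_Phi]
      refine ⟨?_, ?_, ?_⟩
      · intro α
        have := hrow 0 α
        simp only [hb] at this
        have h2 : a 0 * ∑ j, b j * hat (p (yv d k j)) α = 0 := by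
          rw [Finset.mul_sum, ← this]
          apply Finset.sum_congr rfl
          intro j _
          ring
        simpa [ha0] using h2
      · intro j hj
        have h1 := hb j 0
        rw [hω.1 _ (by simp [hj])] at h1
        simpa [ha0] using h1.symm
      · intro c hc
        have h1 := ht c 0 1 (by simp)
        rw [hω.1 _ (by simp [hc])] at h1
        simpa [(hg c).1] using h1.symm
    · ext e
      induction e using sym_cases with
      | hxy i j => simp [hb, mul_comm]
      | hzz c x c' x' =>
        simp only [psi_zz]
        split_ifs with h
        · obtain ⟨rfl, h⟩ := h
          rw [ht c x x' h]
        · rw [hω.1 _ (by simp; tauto)]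
      | hxx => simp [hω.1]
      | hyy => simp [hω.1]
      | hxz => simp [hω.1]
      | hyz => simp [hω.1]
  · rintro ⟨⟨b, t⟩, hbt, rfl⟩
    rw [mem_ker_Phi] at hbt
    obtain ⟨h1, h2, h3⟩ := hbt
    dsimp only at h1 h2 h3
    constructor
    · intro e
      induction e using sym_cases with
      | hxy i j => intro h; simp at h; simp [h2 j h]
      | hzz c x c' x' =>
        intro h
        simp only [psi_zz]
        split_ifs with h'
        · have : c ∉ T := by simp at h; tauto
          simp [h3 c this]
        · rfl
      | _ => intros; simp
    · ext ⟨w, i⟩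
      rw [sum_rows, bip_sum]
      induction w using bip_cases with
      | hx x =>
        simp
        exact dep_aux _ b h1 _ _ _
      | hy y =>
        simp
        simp only [mul_comm (a _)]
        exact dep_aux _ a had _ _ _
      | hz c x =>
        simp only [psi_zx, psi_zy, psi_zz, zero_mul, Finset.sum_const_zero, zero_add]
        rw [Finset.sum_eq_single c (by
          intro c' _ hc'
          simp [hc'.symm]) (by simp)]
        have := dep_aux _ (g c) (hg c).2.1 (t c * g c x) (p (zv d k c x) i) i
        rw [Pi.zero_apply, ← this]
        apply Finset.sum_congr rfl
        intro y _
        by_cases hxy : x = y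
        · subst hxy; simp
        · simp [hxy]

lemma kfold_bipST (hd : 4 ≤ d) (p : BipV d k → Fin d → ℝ) (hp : Generic d p)
    (hS : d + 2 ≤ S.card) (n : ℕ) (hn : n + (d + 1) = S.card + T.card) :
    IsKFoldCircuit d p (bipST d k S T) n := by
  classical
  obtain ⟨a, g, ha, hg, hStr⟩ := Str_eq hd p hp
  have hgp : GenPos (fun j => hat (p (yv d k j))) := genPos_of p hp (yv d k)
    (by intro x y h; simpa [yv] using h) (by simp)
  constructor
  · intro f hf
    rw [noncoloop_iff p _ _ (by simpa using hf), hStr]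
    rw [mem_bipST] at hf
    rcases hf with ⟨i, j, hj, rfl⟩ | ⟨c, hc, x, y, hxy, rfl⟩
    · obtain ⟨b, hb1, hb2, hb3⟩ := hgp.exists_dep S hS j hj
      refine ⟨_, Submodule.mem_map_of_mem ((mem_ker_Phi p (b, 0)).2 ⟨hb2, hb1, by simp⟩), ?_⟩
      simp [ha, hb3]
    · refine ⟨_, Submodule.mem_map_of_mem ((mem_ker_Phi p (0, Pi.single c 1)).2
        ⟨by simp, by simp, ?_⟩), ?_⟩
      · intro c' hc'
        have : c' ≠ c := by rintro rfl; exact hc' hc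
        simp [this]
      · simp [hg, hxy]
  · have h1 := rrk_add_finrank p (bipST d k S T)
    rw [hStr, ← (Submodule.equivMapOfInjective _ (psi_inj a g ha hg) _).finrank_eq] at h1
    have h2 := finrank_ker_Phi (S := S) (T := T) p hp (by omega)
    have h3 : n = Module.finrank ℝ (LinearMap.ker (Phi p S T)) := by omega
    rw [h3, h1]

/-- a circuit inside `K_{d+2,d+3}` is a `K_{d+2,d+2}`. -/
lemma circuit_bip (hd : 4 ≤ d) (p : BipV d k → Fin d → ℝ) (hp : Generic d p)
    (B : Finset (Sym2 (BipV d k))) (hB : B ⊆ bipEdges d k) (hBc : IsKFoldCircuit d p B 1) :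
    ∃ j, B = bipST d k (Finset.univ.erase j) ∅ := by
  classical
  obtain ⟨a, g, ha, hg, hStr⟩ := Str_eq hd p hp
  have hgp : GenPos (fun j => hat (p (yv d k j))) := genPos_of p hp (yv d k)
    (by intro x y h; simpa [yv] using h) (by simp)
  rw [bip_eq] at hB
  have hle : ∀ ω ∈ Str d p (B : Set (Sym2 (BipV d k))), ∃ b : Fin (d+3) → ℝ,
      (∀ α, ∑ j, b j * hat (p (yv d k j)) α = 0) ∧
      ∀ i j, ω s(xv d k i, yv d k j) = a i * b j := by
    intro ω hω
    have h1 : ω ∈ Str d p ↑(bipST d k Finset.univ ∅) :=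
      Str_mono p (by exact_mod_cast hB) hω
    rw [hStr, Submodule.mem_map] at h1
    obtain ⟨⟨b, t⟩, hbt, rfl⟩ := h1
    exact ⟨b, ((mem_ker_Phi _ _).1 hbt).1, by simp⟩
  let S : Finset (Fin (d+3)) := Finset.univ.filter fun j => ∃ i, s(xv d k i, yv d k j) ∈ B
  have hBS : B = bipST d k S ∅ := by
    apply Finset.Subset.antisymm
    · intro e he
      have := hB he
      rw [mem_bipST] at this ⊢
      rcases this with ⟨i, j, -, rfl⟩ | ⟨c, hc, -⟩
      · exact Or.inl ⟨i, j, by simp [S]; exact ⟨i, he⟩, rfl⟩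
      · simp at hc
    · intro e he
      rw [mem_bipST] at he
      rcases he with ⟨i, j, hj, rfl⟩ | ⟨c, hc, -⟩
      · obtain ⟨i', hi'⟩ : ∃ i, s(xv d k i, yv d k j) ∈ B := by simpa [S] using hj
        obtain ⟨ω, hω, hω0⟩ := (noncoloop_iff p _ _ (by simpa using hi')).1 (hBc.1 _ hi')
        obtain ⟨b, hb, hb2⟩ := hle ω hω
        by_contra hcon
        have h3 := hω.1 s(xv d k i, yv d k j) (by simpa using hcon)
        rw [hb2] at h3 hω0
        have : b j = 0 := by simpa [ha] using h3
        simp [this] at hω0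
      · simp at hc
  have hScard : d + 2 ≤ S.card := by
    by_contra hlt
    have h1 := rrk_add_finrank p B
    have h2 := hBc.2
    have h3 : Module.finrank ℝ (Str d p (B : Set (Sym2 (BipV d k)))) = 1 := by omega
    have h4 : Str d p (B : Set (Sym2 (BipV d k))) = ⊥ := by
      rw [hBS, hStr]
      have : LinearMap.ker (Phi p S (∅ : Finset (Fin (k-2)))) = ⊥ := by
        rw [eq_bot_iff]
        rintro ⟨b, t⟩ hbt
        rw [mem_ker_Phi] at hbt
        have hb := hgp b hbt.1 S (by omega) hbt.2.1
        have ht : t = 0 := by ext c; exact hbt.2.2 c (by simp)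
        simp [hb, ht]
      rw [this, Submodule.map_bot]
    rw [h4] at h3
    simp at h3
  have hSne : S ≠ Finset.univ := by
    intro h
    have h1 := (kfold_bipST (k := k) (S := S) (T := ∅) hd p hp hScard 2 (by simp [h]; omega)).2
    rw [← hBS] at h1
    have := hBc.2
    omega
  obtain ⟨j, hj⟩ : ∃ j, j ∉ S := by
    by_contra! h
    exact hSne (Finset.eq_univ_iff_forall.2 h)
  refine ⟨j, ?_⟩
  rw [hBS]
  congr 1
  apply Finset.eq_of_subset_of_card_le
  · intro x hx
    simp
    rintro rfl
    exact hj hx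
  · rw [Finset.card_erase_of_mem (by simp)]
    simpa using hScard

lemma part_star (hd : 4 ≤ d) (p : BipV d k → Fin d → ℝ) (hp : Generic d p)
    (T : Finset (Fin (k-2))) (j : Fin (d+3)) :
    IsPrincipalPart d p (bipST d k Finset.univ T) (T.card + 2) (starAt d k j) := by
  classical
  refine ⟨bipST d k (Finset.univ.erase j) T, ?_, ?_, ?_⟩
  · rw [← bipST_sdiff_star]; exact Finset.sdiff_subset
  · apply kfold_bipST hd p hp
    · simp [Finset.card_erase_of_mem]
    · simp [Finset.card_erase_of_mem]; omega
  · rw [← bipST_sdiff_star, Finset.sdiff_sdiff_eq_self]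
    rw [star_eq]
    intro e
    simp only [mem_bipST]
    rintro (⟨i, j, -, h⟩ | ⟨c, h, -⟩)
    · exact Or.inl ⟨i, j, by simp, h⟩
    · simp at h

lemma part_clique (hd : 4 ≤ d) (p : BipV d k → Fin d → ℝ) (hp : Generic d p)
    (T : Finset (Fin (k-2))) (c : Fin (k-2)) (hc : c ∈ T) :
    IsPrincipalPart d p (bipST d k Finset.univ T) (T.card + 2) (bipST d k ∅ {c}) := by
  classical
  have hpos : 0 < T.card := Finset.card_pos.2 ⟨c, hc⟩
  refine ⟨bipST d k Finset.univ (T.erase c), ?_, ?_, ?_⟩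
  · rw [← bipST_sdiff_clique]; exact Finset.sdiff_subset
  · apply kfold_bipST hd p hp
    · simp
    · simp [Finset.card_erase_of_mem hc]; omega
  · rw [← bipST_sdiff_clique, Finset.sdiff_sdiff_eq_self]
    intro e
    simp only [mem_bipST]
    rintro (⟨i, j, h, -⟩ | ⟨c', h, h'⟩)
    · simp at h
    · simp at h
      subst h
      exact Or.inr ⟨c', hc, h'⟩

lemma inter_empty (hd : 4 ≤ d) (p : BipV d k → Fin d → ℝ) (hp : Generic d p)
    (T : Finset (Fin (k-2))) (e : Sym2 (BipV d k))
    (h1 : ∀ j, e ∈ rcl d p ↑(bipST d k (Finset.univ.erase j) T))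
    (h2 : ∀ c ∈ T, e ∈ rcl d p ↑(bipST d k Finset.univ (T.erase c))) : False := by
  classical
  have hy : ∀ j, yv d k j ∉ e := by
    intro j hj
    refine notMem_rcl p (by omega) hp _ _ _ hj ?_ (h1 j)
    intro f hf
    rw [Finset.mem_coe, mem_bipST] at hf
    rcases hf with ⟨i, j', hj', rfl⟩ | ⟨c, hc, x, y, hxy, rfl⟩
    · simp [xv, yv, zv] at hj' ⊢
      exact Ne.symm hj'
    · simp [xv, yv, zv]
  have hz : ∀ c a, zv d k c a ∉ e := by
    intro c a hca
    by_cases hc : c ∈ T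
    · refine notMem_rcl p (by omega) hp _ _ _ hca ?_ (h2 c hc)
      intro f hf
      rw [Finset.mem_coe, mem_bipST] at hf
      rcases hf with ⟨i, j', hj', rfl⟩ | ⟨c', hc', x, y, hxy, rfl⟩
      · simp [xv, yv, zv]
      · simp [xv, yv, zv] at hc' ⊢
        grind
    · refine notMem_rcl p (by omega) hp _ _ _ hca ?_ (h1 0)
      intro f hf
      rw [Finset.mem_coe, mem_bipST] at hf
      rcases hf with ⟨i, j', hj', rfl⟩ | ⟨c', hc', x, y, hxy, rfl⟩
      · simp [xv, yv, zv]
      · simp [xv, yv, zv] at hc' ⊢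
        grind
  induction e using sym_cases with
  | hxx i i' => exact xx_notMem_rcl hd p hp i i' (h1 0)
  | hxy i j => exact hy j (by simp)
  | hyy i j => exact hy j (by simp)
  | hxz i c a => exact hz c a (by simp)
  | hyz i c a => exact hz c a (by simp)
  | hzz c' a' c a => exact hz c a (by simp)

lemma rrk_empty {V : Type*} [Fintype V] [DecidableEq V] (p : V → Fin d → ℝ) :
    rrk d p ∅ = 0 := by
  simp [rrk]

lemma bipST_inj {S S' : Finset (Fin (d+3))} {T T' : Finset (Fin (k-2))}
    (h : bipST d k S T = bipST d k S' T') : S = S' ∧ T = T' := by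
  constructor
  · ext j
    rw [← bipST_xy (T := T) (k := k) 0 j, h, bipST_xy]
  · ext c
    have := bipST_zz (d := d) (k := k) (S := S) (T := T) c 0 c 1
    rw [h, bipST_zz] at this
    simpa using this.symm

lemma not_balanced (hd : 4 ≤ d) (p : BipV d k → Fin d → ℝ) (hp : Generic d p)
    (T : Finset (Fin (k-2))) :
    ¬ IsBalanced d p (bipST d k Finset.univ T) (T.card + 2) := by
  classical
  intro hbal
  unfold IsBalanced at hbal
  set 𝒜 := {A | IsPrincipalPart d p (bipST d k Finset.univ T) (T.card + 2) A} with h𝒜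
  have hempty : (⋂ A ∈ 𝒜, rcl d p ↑(bipST d k Finset.univ T \ A)) = ∅ := by
    rw [Set.eq_empty_iff_forall_notMem]
    intro e he
    rw [Set.mem_iInter₂] at he
    refine inter_empty hd p hp T e ?_ ?_
    · intro j
      have := he _ (part_star hd p hp T j)
      rwa [bipST_sdiff_star] at this
    · intro c hc
      have := he _ (part_clique hd p hp T c hc)
      rwa [bipST_sdiff_clique] at this
  rw [hempty, rrk_empty] at hbal
  let f : Fin (d+3) ⊕ T → Finset (Sym2 (BipV d k)) :=
    Sum.elim (fun j => bipST d k {j} ∅) (fun c => bipST d k ∅ {c.1})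
  have hf : Function.Injective f := by
    rintro (j | c) (j' | c') h
    · have := bipST_inj h
      simpa using this
    · have := (bipST_inj h).1
      simp at this
    · have := (bipST_inj h).2
      simp at this
    · have := (bipST_inj h).2
      simp at this
      rw [this]
  have hsub : Set.range f ⊆ 𝒜 := by
    rintro _ ⟨j | c, rfl⟩
    · have := part_star hd p hp T j
      rwa [star_eq] at this
    · exact part_clique hd p hp T c.1 c.2
  have hcard := Set.ncard_le_ncard hsub (Set.toFinite _)
  rw [← Set.image_univ, Set.ncard_image_of_injective _ hf, Set.ncard_univ] at hcard
  simp at hcard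
  omega

end Bip
end Helpers
/-- Theorem 3.3: `R_d` does not have the `k`-fold circuit property for `d ≥ 4`, `k ≥ 2`:
`K_{d+2,d+3}` is a double `R_d`-circuit whose principal partition is `{A_1, …, A_{d+3}}`,
with `r_d(⋂ cl_d(D \ A_i)) = 0`, so it is not balanced; and adding `k-2` disjoint copies
of `K_{d+2}` produces an unbalanced `k`-fold `R_d`-circuit. -/
theorem Rd_not_kfold_circuit_property (d k : ℕ) (hd : 4 ≤ d) (hk : 2 ≤ k)
    (p : BipV d k → Fin d → ℝ) (hp : Generic d p) :
    IsKFoldCircuit d p (bipEdges d k) 2 ∧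
    (∀ A : Finset (Sym2 (BipV d k)),
        IsPrincipalPart d p (bipEdges d k) 2 A ↔ ∃ j : Fin (d+3), A = starAt d k j) ∧
    rrk d p (⋂ j : Fin (d+3), rcl d p ↑(bipEdges d k \ starAt d k j)) = 0 ∧
    ¬ IsBalanced d p (bipEdges d k) 2 ∧
    IsKFoldCircuit d p (bipEdges d k ∪ cliqueEdgesZ d k) k ∧
    ¬ IsBalanced d p (bipEdges d k ∪ cliqueEdgesZ d k) k := by
  classical
  have hpart : ∀ j, IsPrincipalPart d p (bipEdges d k) 2 (starAt d k j) := by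
    intro j
    have := part_star hd p hp (∅ : Finset (Fin (k-2))) j
    rwa [← bip_eq] at this
  refine ⟨?_, ?_, ?_, ?_, ?_, ?_⟩
  · rw [bip_eq]
    exact kfold_bipST hd p hp (by simp) 2 (by simp; omega)
  · intro A
    constructor
    · rintro ⟨B, hB, hBc, rfl⟩
      obtain ⟨j, rfl⟩ := circuit_bip hd p hp B hB hBc
      refine ⟨j, ?_⟩
      rw [bip_eq, ← bipST_sdiff_star, Finset.sdiff_sdiff_eq_self]
      rw [star_eq]
      intro e
      simp only [mem_bipST]
      rintro (⟨i, j, -, h⟩ | ⟨c, h, -⟩)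
      · exact Or.inl ⟨i, j, by simp, h⟩
      · simp at h
    · rintro ⟨j, rfl⟩
      exact hpart j
  · rw [show (⋂ j : Fin (d+3), rcl d p ↑(bipEdges d k \ starAt d k j)) = ∅ from ?_, rrk_empty]
    rw [Set.eq_empty_iff_forall_notMem]
    intro e he
    rw [Set.mem_iInter] at he
    refine inter_empty hd p hp ∅ e ?_ (by simp)
    intro j
    have := he j
    rwa [bip_eq, bipST_sdiff_star] at this
  · rw [bip_eq]
    exact not_balanced hd p hp ∅
  · rw [bipZ_eq]
    exact kfold_bipST hd p hp (by simp) k (by simp; omega)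
  · rw [bipZ_eq]
    have := not_balanced hd p hp (Finset.univ : Finset (Fin (k-2)))
    rwa [Finset.card_univ, Fintype.card_fin, Nat.sub_add_cancel hk] at this
end

section
/- Let d ≥ 2 and k ≥ 2, and let G = (V,D) be a graph with no isolated vertices whose edge set D is a k-fold R_d-circuit such that for every (k−1)-fold R_d-circuit B contained in D, the graph (V(B), B) is R_d-rigid. Then the following are equivalent: (1) G is R_d-rigid; (2) G is d-connected (i.e., |V| ≥ d+1 and G − X is connected for every X ⊆ V with |X| < d); (3) the principal partition of D has more than two parts. -/
open scoped BigOperators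

namespace KFold

set_option linter.unusedSectionVars false

variable {d : ℕ} {V : Type*} [Fintype V] [DecidableEq V] (p : V → Fin d → ℝ)

/-- Generic points: differences from a base point are independent. -/
lemma generic_li (hp : Generic d p) (v0 : V) (N : Finset V) (h0 : v0 ∉ N) (hN : N.card ≤ d) :
    LinearIndependent ℝ (fun w : N => p w.1 - p v0) := by
  have hcard : Fintype.card N ≤ Fintype.card (Fin d) := by simpa using hN
  obtain ⟨e⟩ := Function.Embedding.nonempty_of_card_le hcard
  apply LinearIndependent.of_comp (LinearMap.funLeft ℝ ℝ e)
  let P : Matrix N N (MvPolynomial (V × Fin d) ℚ) :=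
    Matrix.of fun w j => MvPolynomial.X (w.1, e j) - MvPolynomial.X (v0, e j)
  have hP : P.det ≠ 0 := by
    intro h
    let g : V × Fin d → ℚ := fun x => if ∃ w : N, w.1 = x.1 ∧ e w = x.2 then 1 else 0
    have h1 := congrArg (MvPolynomial.eval g) h
    rw [RingHom.map_det, map_zero] at h1
    have : (MvPolynomial.eval g).mapMatrix P = 1 := by
      ext w j
      simp only [P, RingHom.mapMatrix_apply, Matrix.map_apply, Matrix.of_apply, map_sub,
        MvPolynomial.eval_X, g]
      have h2 : ¬ ∃ w : N, w.1 = v0 ∧ e w = e j := by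
        rintro ⟨w, hw, -⟩
        exact h0 (hw ▸ w.2)
      rw [if_neg h2]
      by_cases hwj : w = j
      · subst hwj
        rw [if_pos ⟨w, rfl, rfl⟩]; simp
      · rw [if_neg, Matrix.one_apply_ne hwj]; · simp
        rintro ⟨w', h3, h4⟩
        exact hwj ((Subtype.ext h3).symm.trans (e.injective h4))
    rw [this, Matrix.det_one] at h1
    exact one_ne_zero h1
  have hQ : (Matrix.of fun (w j : N) => p w.1 (e j) - p v0 (e j)).det ≠ 0 := by
    intro h
    apply hP
    have hinj : Function.Injective (MvPolynomial.aeval (R := ℚ) fun vi : V × Fin d => p vi.1 vi.2) := hp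
    apply hinj
    rw [map_zero, ← h, AlgHom.map_det]
    congr 1
    ext w j
    simp [P]
  exact Matrix.linearIndependent_rows_of_det_ne_zero hQ

/-- Edge functional. -/
lemma row_dot (u v : V) (x : V × Fin d → ℝ) :
    rigRow d p s(u, v) ⬝ᵥ x = ∑ i, (p u i - p v i) * (x (u, i) - x (v, i)) := by
  simp only [rigRow, Sym2.lift_mk, dotProduct, Fintype.sum_prod_type]
  rw [Finset.sum_comm]
  refine Finset.sum_congr rfl fun i _ => ?_
  simp [sub_mul, mul_sub, Finset.sum_sub_distrib]
  ring

/-- Infinitesimal motions. -/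
def ker (E : Set (Sym2 V)) : Submodule ℝ (V × Fin d → ℝ) where
  carrier := {x | ∀ e ∈ E, rigRow d p e ⬝ᵥ x = 0}
  add_mem' := by
    intro a b ha hb e he
    rw [dotProduct_add, ha e he, hb e he, add_zero]
  zero_mem' := by intro e _; simp
  smul_mem' := by
    intro c x hx e he
    rw [dotProduct_smul, hx e he, smul_zero]

lemma finrank_ker (E : Set (Sym2 V)) :
    rrk d p E + Module.finrank ℝ (ker p E) = Fintype.card V * d := by
  classical
  let M : Matrix E (V × Fin d) ℝ := Matrix.of fun e => rigRow d p e.1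
  have h1 := LinearMap.finrank_range_add_finrank_ker M.mulVecLin
  have h2 : Module.finrank ℝ (LinearMap.range M.mulVecLin) = rrk d p E := by
    have := M.rank_eq_finrank_span_row
    rw [Matrix.rank] at this
    rw [this, rrk]
    have h5 : Set.range M.row = rigRow d p '' E := by rw [Set.image_eq_range]; rfl
    rw [h5]
  have h3 : LinearMap.ker M.mulVecLin = ker p E := by
    ext x
    simp only [LinearMap.mem_ker, Matrix.mulVecLin_apply]
    constructor
    · intro h e he
      exact congrFun h ⟨e, he⟩
    · intro h
      funext e
      exact h e.1 e.2
  rw [h2, h3] at h1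
  simpa using h1

/-- skew matrix from parameters -/
noncomputable def skew (c : Sym2 (Fin d) → ℝ) (i j : Fin d) : ℝ :=
  if i < j then c s(i, j) else if j < i then - c s(i, j) else 0

/-- trivial motions -/
noncomputable def triv : (Sym2 (Fin d) → ℝ) →ₗ[ℝ] (V × Fin d → ℝ) where
  toFun c := fun vi => (∑ j, skew c vi.2 j * p vi.1 j) + c s(vi.2, vi.2)
  map_add' a b := by
    funext vi
    have : ∀ i j, skew (a + b) i j = skew a i j + skew b i j := by
      intro i j; unfold skew; split_ifs <;> simp [add_comm]
    simp only [this, add_mul, Finset.sum_add_distrib, Pi.add_apply]; ring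
  map_smul' r a := by
    funext vi
    have : ∀ i j, skew (r • a) i j = r * skew a i j := by
      intro i j; unfold skew; split_ifs <;> simp
    simp only [this, Pi.smul_apply, smul_eq_mul, RingHom.id_apply, mul_add, Finset.mul_sum, mul_assoc]

lemma triv_apply (c : Sym2 (Fin d) → ℝ) (v : V) (i : Fin d) :
    triv p c (v, i) = (∑ j, skew c i j * p v j) + c s(i, i) := rfl

lemma skew_anti (c : Sym2 (Fin d) → ℝ) (i j : Fin d) : skew c i j = - skew c j i := by
  unfold skew
  rw [Sym2.eq_swap (a := j)]
  split_ifs <;> first | omega | simp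

lemma exists_param (A : Fin d → Fin d → ℝ) (hA : ∀ i j, A i j = - A j i) (b : Fin d → ℝ) :
    ∃ c : Sym2 (Fin d) → ℝ, (∀ i j, skew c i j = A i j) ∧ ∀ i, c s(i, i) = b i := by
  refine ⟨fun e => Sym2.lift ⟨fun i j => if i < j then A i j else if j < i then A j i else b i, ?_⟩ e,
    ?_, ?_⟩
  · intro i j
    dsimp only
    split_ifs <;> first | omega | rfl | skip
    have : i = j := by omega
    rw [this]
  · intro i j
    simp only [skew, Sym2.lift_mk]
    split_ifs
    · rfl
    · exact (hA i j).symm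
    · have : i = j := by omega
      subst this
      linarith [hA i i]
  · intro i
    simp

lemma triv_sub (c : Sym2 (Fin d) → ℝ) (u v : V) (i : Fin d) :
    triv p c (u, i) - triv p c (v, i) = ∑ j, skew c i j * (p u j - p v j) := by
  simp only [triv_apply, mul_sub, Finset.sum_sub_distrib]; ring

lemma skew_form (c : Sym2 (Fin d) → ℝ) (x y : Fin d → ℝ) :
    ∑ i, y i * ∑ j, skew c i j * x j = - ∑ i, x i * ∑ j, skew c i j * y j := by
  simp only [Finset.mul_sum]
  rw [Finset.sum_comm, ← Finset.sum_neg_distrib]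
  refine Finset.sum_congr rfl fun i _ => ?_
  rw [← Finset.sum_neg_distrib]
  refine Finset.sum_congr rfl fun j _ => ?_
  rw [skew_anti c i j]; ring

lemma triv_mem_ker (c : Sym2 (Fin d) → ℝ) (u v : V) :
    ∑ i, (p u i - p v i) * (triv p c (u, i) - triv p c (v, i)) = 0 := by
  simp only [triv_sub]
  have := skew_form c (fun j => p u j - p v j) (fun j => p u j - p v j)
  linarith

/-- A trivial motion vanishing on `d` points is zero. -/
lemma triv_vanish (hd : 2 ≤ d) (hp : Generic d p) (hV : d + 1 ≤ Fintype.card V)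
    (c : Sym2 (Fin d) → ℝ) (S : Finset V) (hS : d ≤ S.card)
    (h : ∀ v ∈ S, ∀ i, triv p c (v, i) = 0) : c = 0 := by
  obtain ⟨S', hS', hcard⟩ := Finset.exists_subset_card_eq hS
  obtain ⟨v0, hv0⟩ : S'.Nonempty := by rw [← Finset.card_pos]; omega
  obtain ⟨z, -, hz⟩ : ∃ z ∈ (Finset.univ : Finset V), z ∉ S' :=
    Finset.exists_mem_notMem_of_card_lt_card (by rw [Finset.card_univ]; omega)
  let N := insert z (S'.erase v0)
  have hzN : z ∉ S'.erase v0 := fun h => hz (Finset.mem_of_mem_erase h)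
  have hNc : N.card = d := by
    rw [Finset.card_insert_of_notMem hzN, Finset.card_erase_of_mem hv0]; omega
  have h0N : v0 ∉ N := by
    simp only [N, Finset.mem_insert, Finset.mem_erase]
    rintro (rfl | h)
    · exact hz hv0
    · exact h.1 rfl
  have hli := generic_li p hp v0 N h0N hNc.le
  have hspan := hli.span_eq_top_of_card_eq_finrank' (by simp [hNc])
  let A : (Fin d → ℝ) →ₗ[ℝ] (Fin d → ℝ) := Matrix.mulVecLin (Matrix.of (skew c))
  have hAx : ∀ x i, A x i = ∑ j, skew c i j * x j := fun x i => rfl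
  have hA1 : ∀ n ∈ S'.erase v0, A (p n - p v0) = 0 := by
    intro n hn
    funext i
    rw [hAx]
    have := triv_sub p c n v0 i
    rw [h n (hS' (Finset.mem_of_mem_erase hn)), h v0 (hS' hv0)] at this
    simp only [Pi.sub_apply, Pi.zero_apply]
    linarith
  have hform : ∀ x y, y ⬝ᵥ A x = - (x ⬝ᵥ A y) := fun x y => skew_form c x y
  have hA2 : ∀ n m : N, (p m.1 - p v0) ⬝ᵥ A (p n.1 - p v0) = 0 := by
    rintro ⟨n, hn⟩ ⟨m, hm⟩
    rcases Finset.mem_insert.1 hn with rfl | hn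
    · rcases Finset.mem_insert.1 hm with rfl | hm
      · have := hform (p m - p v0) (p m - p v0)
        show (p m - p v0) ⬝ᵥ A (p m - p v0) = 0
        linarith
      · rw [hform]; simp only [hA1 m hm]; simp
    · simp only [hA1 n hn]; simp
  have hA3 : ∀ n : N, A (p n.1 - p v0) = 0 := by
    intro n
    have h1 : ∀ y, y ⬝ᵥ A (p n.1 - p v0) = 0 := by
      intro y
      have hy : y ∈ Submodule.span ℝ (Set.range fun w : N => p w.1 - p v0) := by rw [hspan]; trivial
      induction hy using Submodule.span_induction with
      | mem x hx => obtain ⟨m, rfl⟩ := hx; exact hA2 n m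
      | zero => simp
      | add x y _ _ hx hy => rw [add_dotProduct, hx, hy, add_zero]
      | smul a x _ hx => rw [smul_dotProduct, hx, smul_zero]
    exact dotProduct_self_eq_zero.1 (h1 _)
  have hA4 : ∀ x, A x = 0 := by
    intro y
    have hy : y ∈ Submodule.span ℝ (Set.range fun w : N => p w.1 - p v0) := by rw [hspan]; trivial
    induction hy using Submodule.span_induction with
    | mem x hx => obtain ⟨m, rfl⟩ := hx; exact hA3 m
    | zero => simp
    | add x y _ _ hx hy => rw [map_add, hx, hy, add_zero]
    | smul a x _ hx => rw [map_smul, hx, smul_zero]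
  have hsk : ∀ i j, skew c i j = 0 := by
    intro i j
    have := congrFun (hA4 (Pi.single j 1)) i
    rw [hAx] at this
    simpa [Pi.single_apply] using this
  funext e
  induction e using Sym2.ind with
  | _ i j =>
    rcases lt_trichotomy i j with hij | hij | hij
    · have := hsk i j
      rwa [skew, if_pos hij] at this
    · subst hij
      have := h v0 (hS' hv0) i
      rw [triv_apply] at this
      simpa [hsk] using this
    · have := hsk j i
      rwa [skew, if_pos hij, Sym2.eq_swap] at this

/-- A nonzero trivial motion fixing fewer than `d` points. -/
lemma exists_rot (hd : 2 ≤ d) [Nonempty V] (X : Finset V) (hX : X.card < d) :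
    ∃ c : Sym2 (Fin d) → ℝ, c ≠ 0 ∧ ∀ v ∈ X, ∀ i, triv p c (v, i) = 0 := by
  obtain ⟨x0, hx0⟩ : ∃ x0 : V, (X.erase x0).card + 2 ≤ d := by
    rcases X.eq_empty_or_nonempty with rfl | ⟨x, hx⟩
    · exact ⟨Classical.arbitrary V, by simpa using hd⟩
    · exact ⟨x, by rw [Finset.card_erase_of_mem hx]; have := Finset.card_pos.2 ⟨x, hx⟩; omega⟩
  let M : Matrix (X.erase x0) (Fin d) ℝ := Matrix.of fun v => p v.1 - p x0
  have h1 := LinearMap.finrank_range_add_finrank_ker M.mulVecLin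
  have h2 := Submodule.finrank_le (LinearMap.range M.mulVecLin)
  have h3 : 1 < Module.finrank ℝ (LinearMap.ker M.mulVecLin) := by
    simp only [Module.finrank_fintype_fun_eq_card, Fintype.card_fin, Fintype.card_coe] at h1 h2
    omega
  obtain ⟨u, hu⟩ := Module.finrank_pos_iff_exists_ne_zero.1 (lt_trans one_pos h3)
  obtain ⟨w, hw⟩ := exists_linearIndependent_pair_of_one_lt_finrank h3 hu
  have hu' : u.1 ≠ 0 := fun h => hu (Subtype.ext h)
  have hperp : ∀ t : LinearMap.ker M.mulVecLin, ∀ v ∈ X, ∑ j, t.1 j * (p v j - p x0 j) = 0 := by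
    intro t v hv
    by_cases hvx : v = x0
    · subst hvx; simp
    · have := congrFun (LinearMap.mem_ker.1 t.2) ⟨v, Finset.mem_erase.2 ⟨hvx, hv⟩⟩
      simp only [Matrix.mulVecLin_apply, Matrix.mulVec, dotProduct, M, Matrix.of_apply,
        Pi.zero_apply, Pi.sub_apply] at this
      rw [← this]
      exact Finset.sum_congr rfl fun _ _ => mul_comm _ _
  let A : Fin d → Fin d → ℝ := fun i j => w.1 i * u.1 j - u.1 i * w.1 j
  obtain ⟨c, hc1, hc2⟩ := exists_param A (fun i j => by simp only [A]; ring)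
    (fun i => - ∑ j, A i j * p x0 j)
  refine ⟨c, ?_, ?_⟩
  · rintro rfl
    have hA : ∀ i j, A i j = 0 := by
      intro i j; rw [← hc1]; simp [skew]
    obtain ⟨j, hj⟩ := Function.ne_iff.1 hu'
    have hj : u.1 j ≠ 0 := hj
    rw [LinearIndependent.pair_iff] at hw
    have := hw (w.1 j) (- u.1 j) (by
      apply Subtype.ext
      funext i
      have := hA i j
      simp only [A] at this
      simp only [Submodule.coe_add, Submodule.coe_smul, Pi.add_apply, Pi.smul_apply, smul_eq_mul,
        Submodule.coe_zero, Pi.zero_apply]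
      linarith)
    exact hj (neg_eq_zero.1 this.2)
  · intro v hv i
    rw [triv_apply, hc2]
    simp only [hc1]
    have : ∑ j, A i j * p v j + -∑ j, A i j * p x0 j
        = w.1 i * ∑ j, u.1 j * (p v j - p x0 j) - u.1 i * ∑ j, w.1 j * (p v j - p x0 j) := by
      simp only [A, Finset.mul_sum, ← Finset.sum_neg_distrib, ← Finset.sum_add_distrib,
        ← Finset.sum_sub_distrib]
      refine Finset.sum_congr rfl fun _ _ => ?_
      ring
    rw [this, hperp u v hv, hperp w v hv]; simp

/-- Motions that are trivial on `W`. -/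
noncomputable def ext (W : Finset V) :
    ((Sym2 (Fin d) → ℝ) × ({v : V // v ∉ W} × Fin d → ℝ)) →ₗ[ℝ] (V × Fin d → ℝ) where
  toFun cy := fun vi => triv p cy.1 vi + if h : vi.1 ∉ W then cy.2 (⟨vi.1, h⟩, vi.2) else 0
  map_add' a b := by
    funext vi
    simp only [Prod.fst_add, Prod.snd_add, map_add, Pi.add_apply]
    split_ifs <;> ring
  map_smul' r a := by
    funext vi
    simp only [Prod.smul_fst, Prod.smul_snd, map_smul, Pi.smul_apply, smul_eq_mul, RingHom.id_apply]
    split_ifs <;> ring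

lemma ext_in (W : Finset V) (cy) (v : V) (hv : v ∈ W) (i : Fin d) :
    ext p W cy (v, i) = triv p cy.1 (v, i) := by
  simp [ext, hv]

lemma finrank_ext (hd : 2 ≤ d) (hp : Generic d p) (hV : d + 1 ≤ Fintype.card V)
    (W : Finset V) (hW : d ≤ W.card) :
    Module.finrank ℝ (LinearMap.range (ext p W)) + d * W.card
      = (d + 1).choose 2 + Fintype.card V * d := by
  have hinj : Function.Injective (ext p W) := by
    rw [← LinearMap.ker_eq_bot, LinearMap.ker_eq_bot']
    rintro ⟨c, y⟩ h
    have hc : c = 0 := by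
      apply triv_vanish p hd hp hV c W hW
      intro v hv i
      rw [← ext_in p W (c, y) v hv, h]; rfl
    subst hc
    have hy : y = 0 := by
      funext ⟨⟨v, hv⟩, i⟩
      have := congrFun h (v, i)
      simpa [ext, hv] using this
    rw [hy]; rfl
  rw [LinearMap.finrank_range_of_inj hinj, Module.finrank_prod, Module.finrank_fintype_fun_eq_card,
    Module.finrank_fintype_fun_eq_card, Sym2.card, Fintype.card_prod, Fintype.card_fin]
  have h1 : Fintype.card {v : V // v ∉ W} + W.card = Fintype.card V := by
    rw [Fintype.card_subtype_compl, Fintype.card_coe]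
    have := Finset.card_le_univ W
    omega
  rw [← h1]; ring

lemma ext_le_ker (W : Finset V) (E : Set (Sym2 V)) (hE : ∀ e ∈ E, ∀ a ∈ e, a ∈ W) :
    LinearMap.range (ext p W) ≤ ker p E := by
  rintro _ ⟨cy, rfl⟩ e he
  induction e using Sym2.ind with
  | _ u v =>
    rw [row_dot]
    simp only [ext_in p W cy u (hE _ he u (by simp)), ext_in p W cy v (hE _ he v (by simp))]
    exact triv_mem_ker p cy.1 u v

lemma rank_le (hd : 2 ≤ d) (hp : Generic d p) (hV : d + 1 ≤ Fintype.card V)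
    (W : Finset V) (hW : d ≤ W.card) (E : Set (Sym2 V)) (hE : ∀ e ∈ E, ∀ a ∈ e, a ∈ W) :
    rrk d p E + (d + 1).choose 2 ≤ d * W.card := by
  have h1 := Submodule.finrank_mono (ext_le_ker p W E hE)
  have h2 := finrank_ext p hd hp hV W hW
  have h3 := finrank_ker p E
  omega

lemma rigid_iff (hd : 2 ≤ d) (hp : Generic d p) (hV : d + 1 ≤ Fintype.card V)
    (W : Finset V) (hW : d ≤ W.card) (E : Set (Sym2 V)) (hE : ∀ e ∈ E, ∀ a ∈ e, a ∈ W) :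
    rrk d p E + (d + 1).choose 2 = d * W.card ↔
      ∀ x ∈ ker p E, ∃ c, ∀ v ∈ W, ∀ i, x (v, i) = triv p c (v, i) := by
  have h1 := ext_le_ker p W E hE
  have h2 := finrank_ext p hd hp hV W hW
  have h3 := finrank_ker p E
  constructor
  · intro h x hx
    have : LinearMap.range (ext p W) = ker p E :=
      Submodule.eq_of_le_of_finrank_eq h1 (by omega)
    rw [← this] at hx
    obtain ⟨cy, rfl⟩ := hx
    exact ⟨cy.1, fun v hv i => ext_in p W cy v hv i⟩
  · intro h
    have : LinearMap.range (ext p W) = ker p E := by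
      refine le_antisymm h1 ?_
      intro x hx
      obtain ⟨c, hc⟩ := h x hx
      refine ⟨(c, fun vi => x (vi.1.1, vi.2) - triv p c (vi.1.1, vi.2)), ?_⟩
      funext ⟨v, i⟩
      by_cases hv : v ∈ W
      · rw [ext_in p W _ v hv, hc v hv]
      · simp [ext, hv]
    rw [this] at h2
    omega

lemma mem_esupp {F : Finset (Sym2 V)} {a : V} : a ∈ esupp F ↔ ∃ e ∈ F, a ∈ e := by
  simp [esupp]

lemma ker_of_bridgeless (E : Set (Sym2 V)) (f : Sym2 V)
    (h : rrk d p (E \ {f}) = rrk d p E) : ker p (E \ {f}) = ker p E := by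
  symm
  apply Submodule.eq_of_le_of_finrank_eq
  · intro x hx e he
    exact hx e he.1
  · have h1 := finrank_ker p E
    have h2 := finrank_ker p (E \ {f})
    omega

/-- neighbours -/
def nbr (B : Finset (Sym2 V)) (v : V) : Finset V := Finset.univ.filter fun w => s(v, w) ∈ B

lemma mem_nbr {B : Finset (Sym2 V)} {v w : V} : w ∈ nbr B v ↔ s(v, w) ∈ B := by simp [nbr]

lemma degree (hp : Generic d p) (B : Finset (Sym2 V)) (hs : ∀ e ∈ B, ¬ e.IsDiag)
    (hB : ∀ f ∈ B, rrk d p (↑B \ {f}) = rrk d p ↑B) (v : V) (hv : v ∈ esupp B) :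
    d < (nbr B v).card := by
  by_contra hlt
  push Not at hlt
  obtain ⟨e, he, hve⟩ := mem_esupp.1 hv
  obtain ⟨w, rfl⟩ := Sym2.mem_iff_exists.1 hve
  have hvN : v ∉ nbr B v := by
    intro h
    exact hs _ (mem_nbr.1 h) (by simp)
  have hli := generic_li p hp v (nbr B v) hvN hlt
  have hwN : w ∈ nbr B v := mem_nbr.2 he
  -- find y with prescribed dot products
  obtain ⟨y, hy⟩ : ∃ y : Fin d → ℝ, ∀ u : nbr B v, (p u.1 - p v) ⬝ᵥ y = if u.1 = w then 1 else 0 := by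
    let M : Matrix (nbr B v) (Fin d) ℝ := Matrix.of fun u => p u.1 - p v
    have hr : M.rank = Fintype.card (nbr B v) := LinearIndependent.rank_matrix hli
    have htop : LinearMap.range M.mulVecLin = ⊤ := by
      apply Submodule.eq_top_of_finrank_eq
      rw [Module.finrank_fintype_fun_eq_card]; exact hr
    obtain ⟨y, hy⟩ := LinearMap.range_eq_top.1 htop (fun u => if u.1 = w then 1 else 0)
    exact ⟨y, fun u => congrFun hy u⟩
  have hk := ker_of_bridgeless p (↑B) s(v, w) (hB _ he)
  let x : V × Fin d → ℝ := fun ui => if ui.1 = v then y ui.2 else 0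
  have hxu : ∀ u, u ≠ v → ∀ i, x (u, i) = 0 := by intro u hu i; simp [x, hu]
  have hxv : ∀ i, x (v, i) = y i := by intro i; simp [x]
  have hdot : ∀ u : nbr B v, rigRow d p s(v, u.1) ⬝ᵥ x = - if u.1 = w then 1 else 0 := by
    intro u
    have huv : u.1 ≠ v := fun h => hvN (by have := u.2; rwa [h] at this)
    rw [row_dot, ← hy u]
    simp only [hxu u.1 huv, hxv, dotProduct, ← Finset.sum_neg_distrib, Pi.sub_apply]
    refine Finset.sum_congr rfl fun _ _ => ?_
    ring
  have hx : x ∈ ker p (↑B \ {s(v, w)}) := by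
    rintro e ⟨heB, hne⟩
    have heB : e ∈ B := heB
    by_cases hve : v ∈ e
    · obtain ⟨u, rfl⟩ := Sym2.mem_iff_exists.1 hve
      have := hdot ⟨u, mem_nbr.2 heB⟩
      rw [this, if_neg]
      · simp
      · rintro rfl
        exact hne rfl
    · induction e using Sym2.ind with
      | _ a b =>
        rw [row_dot]
        have ha : a ≠ v := by rintro rfl; exact hve (by simp)
        have hb : b ≠ v := by rintro rfl; exact hve (by simp)
        simp [hxu a ha, hxu b hb]
  rw [hk] at hx
  have h1 := hx _ he
  rw [hdot ⟨w, hwN⟩, if_pos rfl] at h1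
  norm_num at h1

lemma nbr_sub (B : Finset (Sym2 V)) (v : V) : nbr B v ⊆ esupp B := by
  intro w hw
  exact mem_esupp.2 ⟨_, mem_nbr.1 hw, by simp⟩

lemma card_esupp (hp : Generic d p) (B : Finset (Sym2 V)) (hs : ∀ e ∈ B, ¬ e.IsDiag)
    (hB : ∀ f ∈ B, rrk d p (↑B \ {f}) = rrk d p ↑B) (hne : B.Nonempty) :
    d + 2 ≤ (esupp B).card := by
  obtain ⟨e, he⟩ := hne
  induction e using Sym2.ind with
  | _ v w =>
    have hv : v ∈ esupp B := mem_esupp.2 ⟨_, he, by simp⟩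
    have h1 := degree p hp B hs hB v hv
    have hvN : v ∉ nbr B v := fun h => hs _ (mem_nbr.1 h) (by simp)
    have h2 : (insert v (nbr B v)).card ≤ (esupp B).card :=
      Finset.card_le_card (Finset.insert_subset hv (nbr_sub B v))
    rw [Finset.card_insert_of_notMem hvN] at h2
    omega

/-- Rigid bridgeless graphs are not separated by fewer than `d` vertices. -/
lemma no_sep (hd : 2 ≤ d) (hp : Generic d p) (hV : d + 1 ≤ Fintype.card V)
    (B : Finset (Sym2 V)) (hs : ∀ e ∈ B, ¬ e.IsDiag)
    (hB : ∀ f ∈ B, rrk d p (↑B \ {f}) = rrk d p ↑B)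
    (hrig : rrk d p (↑B) + (d + 1).choose 2 = d * (esupp B).card)
    (X P : Finset V) (hX : X.card < d)
    (hP : ∀ a b, s(a, b) ∈ B → a ∈ P → b ∈ P ∨ b ∈ X)
    (a b : V) (ha : a ∈ esupp B) (haP : a ∈ P) (hb : b ∈ esupp B) (hbP : b ∉ P) (hbX : b ∉ X) :
    False := by
  have : Nonempty V := ⟨a⟩
  obtain ⟨c, hc0, hcX⟩ := exists_rot p hd X hX
  have hW : d ≤ (esupp B).card :=
    (degree p hp B hs hB a ha).le.trans (Finset.card_le_card (nbr_sub B a))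
  have hmot := (rigid_iff p hd hp hV (esupp B) hW ↑B
    (fun e he a ha => mem_esupp.2 ⟨e, he, ha⟩)).1 hrig
  let x : V × Fin d → ℝ := fun vi => if vi.1 ∈ P then triv p c vi else 0
  have hxP : ∀ v, v ∈ P ∨ v ∈ X → ∀ i, x (v, i) = triv p c (v, i) := by
    intro v hv i
    by_cases h : v ∈ P
    · simp [x, h]
    · rw [hcX v (hv.resolve_left h)]; simp [x, h]
  have hx0 : ∀ v, v ∉ P → ∀ i, x (v, i) = 0 := by
    intro v hv i; simp [x, hv]
  have hx : x ∈ ker p ↑B := by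
    intro e he
    induction e using Sym2.ind with
    | _ u v =>
      have he : s(u, v) ∈ B := he
      rw [row_dot]
      by_cases hu : u ∈ P
      · simp only [hxP u (Or.inl hu), hxP v (hP u v he hu)]
        exact triv_mem_ker p c u v
      · by_cases hv : v ∈ P
        · simp only [hxP v (Or.inl hv), hxP u (hP v u (by rwa [Sym2.eq_swap]) hv)]
          exact triv_mem_ker p c u v
        · simp [hx0 u hu, hx0 v hv]
  obtain ⟨c', hc'⟩ := hmot x hx
  have hc'0 : c' = 0 := by
    apply triv_vanish p hd hp hV c' (nbr B b) (degree p hp B hs hB b hb).le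
    intro v hv i
    rw [← hc' v (nbr_sub B b hv)]
    apply hx0
    intro hvP
    have := hP v b (by rw [Sym2.eq_swap]; exact mem_nbr.1 hv) hvP
    tauto
  subst hc'0
  apply hc0
  apply triv_vanish p hd hp hV c (nbr B a) (degree p hp B hs hB a ha).le
  intro v hv i
  rw [← hxP v (hP a v (mem_nbr.1 hv) haP), hc' v (nbr_sub B a hv)]
  simp

/-! Matroid facts -/

lemma rrk_mono {E F : Set (Sym2 V)} (h : E ⊆ F) : rrk d p E ≤ rrk d p F :=
  Submodule.finrank_mono (Submodule.span_mono (Set.image_mono h))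

lemma rrk_submod (E F : Set (Sym2 V)) :
    rrk d p (E ∪ F) + rrk d p (E ∩ F) ≤ rrk d p E + rrk d p F := by
  unfold rrk
  rw [Set.image_union, Submodule.span_union]
  have h1 := Submodule.finrank_sup_add_finrank_inf_eq
    (Submodule.span ℝ (rigRow d p '' E)) (Submodule.span ℝ (rigRow d p '' F))
  have h2 : Submodule.span ℝ (rigRow d p '' (E ∩ F)) ≤
      Submodule.span ℝ (rigRow d p '' E) ⊓ Submodule.span ℝ (rigRow d p '' F) :=
    le_inf (Submodule.span_mono (Set.image_mono Set.inter_subset_left))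
      (Submodule.span_mono (Set.image_mono Set.inter_subset_right))
  have h3 := Submodule.finrank_mono h2
  omega

lemma rrk_le_card (E : Finset (Sym2 V)) : rrk d p ↑E ≤ E.card := by
  classical
  unfold rrk
  rw [← Finset.coe_image]
  exact (finrank_span_finset_le_card _).trans Finset.card_image_le

/-- rank grows by at most the number of elements -/
lemma rrk_sdiff (E F : Finset (Sym2 V)) (h : E ⊆ F) :
    rrk d p ↑F + E.card ≤ rrk d p ↑E + F.card := by
  have h1 := rrk_submod p (↑E : Set (Sym2 V)) (↑(F \ E))
  have h2 := rrk_le_card p (F \ E)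
  have h3 := Finset.card_sdiff_add_card_eq_card h
  have h4 : (↑E : Set (Sym2 V)) ∪ ↑(F \ E) = ↑F := by
    rw [← Finset.coe_union, Finset.union_sdiff_of_subset h]
  rw [h4] at h1
  omega

/-- proper subsets of bridgeless sets have smaller nullity -/
lemma nullity_lt {B F : Finset (Sym2 V)} (hB : ∀ f ∈ B, rrk d p (↑B \ {f}) = rrk d p ↑B)
    (hF : F ⊂ B) : rrk d p ↑B + F.card + 1 ≤ rrk d p ↑F + B.card := by
  obtain ⟨hsub, hne⟩ := Finset.ssubset_iff_subset_ne.1 hF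
  obtain ⟨g, hgB, hgF⟩ := Finset.exists_of_ssubset hF
  have h1 : F ⊆ B.erase g := Finset.subset_erase.2 ⟨hsub, hgF⟩
  have h2 := rrk_sdiff p _ _ h1
  rw [Finset.coe_erase, hB g hgB, Finset.card_erase_of_mem hgB] at h2
  have := Finset.card_pos.2 ⟨g, hgB⟩
  omega

lemma exists_part {D : Finset (Sym2 V)} {k : ℕ} (hk : 2 ≤ k) (hD : IsKFoldCircuit d p D k)
    {f : Sym2 V} (hf : f ∈ D) : ∃ B ⊆ D, IsKFoldCircuit d p B (k - 1) ∧ f ∉ B := by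
  classical
  let S := (D.erase f).powerset.filter fun B : Finset (Sym2 V) => rrk d p ↑B + (k - 1) = B.card
  have hS : (D.erase f) ∈ S := by
    simp only [S, Finset.mem_filter, Finset.mem_powerset, subset_refl, true_and]
    rw [Finset.coe_erase, hD.1 f hf, Finset.card_erase_of_mem hf, ← hD.2]
    omega
  obtain ⟨B, hBS, hmin⟩ := Finset.exists_min_image S Finset.card ⟨_, hS⟩
  simp only [S, Finset.mem_filter, Finset.mem_powerset] at hBS
  refine ⟨B, hBS.1.trans (Finset.erase_subset _ _), ⟨?_, hBS.2⟩, fun h => by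
    simpa using hBS.1 h⟩
  intro g hg
  by_contra hne
  have h1 : rrk d p (↑B \ {g}) < rrk d p ↑B := lt_of_le_of_ne (rrk_mono p Set.diff_subset) hne
  have h2 := rrk_sdiff p (B.erase g) B (Finset.erase_subset _ _)
  have h3 := Finset.card_erase_of_mem hg
  have h4 := Finset.card_pos.2 ⟨g, hg⟩
  rw [Finset.coe_erase] at h2
  have h5 := hmin (B.erase g) (by
    simp only [S, Finset.mem_filter, Finset.mem_powerset]
    refine ⟨(Finset.erase_subset _ _).trans hBS.1, ?_⟩
    rw [Finset.coe_erase]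
    omega)
  omega

lemma union_eq {D B₁ B₂ : Finset (Sym2 V)} {k : ℕ} (hk : 2 ≤ k) (hD : IsKFoldCircuit d p D k)
    (h1 : B₁ ⊆ D) (h2 : B₂ ⊆ D) (c1 : IsKFoldCircuit d p B₁ (k - 1))
    (c2 : IsKFoldCircuit d p B₂ (k - 1)) (hne : B₁ ≠ B₂) : B₁ ∪ B₂ = D := by
  by_contra hU
  have hss : B₁ ∪ B₂ ⊂ D := Finset.ssubset_iff_subset_ne.2 ⟨Finset.union_subset h1 h2, hU⟩
  have hi : B₁ ∩ B₂ ⊂ B₁ := by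
    refine Finset.ssubset_iff_subset_ne.2 ⟨Finset.inter_subset_left, fun h => ?_⟩
    have hsub : B₁ ⊂ B₂ := Finset.ssubset_iff_subset_ne.2 ⟨Finset.inter_eq_left.1 h, hne⟩
    have := nullity_lt p c2.1 hsub
    have e1 := c1.2
    have e2 := c2.2
    omega
  have n1 := nullity_lt p hD.1 hss
  have n2 := nullity_lt p c1.1 hi
  have hsm := rrk_submod p (↑B₁ : Set (Sym2 V)) ↑B₂
  rw [← Finset.coe_union, ← Finset.coe_inter] at hsm
  have hc := Finset.card_union_add_card_inter B₁ B₂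
  have e0 := hD.2
  have e1 := c1.2
  have e2 := c2.2
  omega

lemma rigid_count (hp : Generic d p) (B : Finset (Sym2 V)) (hs : ∀ e ∈ B, ¬ e.IsDiag)
    (hB : ∀ f ∈ B, rrk d p (↑B \ {f}) = rrk d p ↑B) (hne : B.Nonempty)
    (h : IsRigidOn d p (esupp B) B) :
    rrk d p (↑B) + (d + 1).choose 2 = d * (esupp B).card := by
  have h1 := card_esupp p hp B hs hB hne
  rcases h with h | h
  · omega
  · exact_mod_cast h

lemma esupp_union (B₁ B₂ : Finset (Sym2 V)) : esupp (B₁ ∪ B₂) = esupp B₁ ∪ esupp B₂ := by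
  ext a
  simp only [mem_esupp, Finset.mem_union]
  constructor
  · rintro ⟨e, he | he, ha⟩
    · exact Or.inl ⟨e, he, ha⟩
    · exact Or.inr ⟨e, he, ha⟩
  · rintro (⟨e, he, ha⟩ | ⟨e, he, ha⟩)
    · exact ⟨e, Or.inl he, ha⟩
    · exact ⟨e, Or.inr he, ha⟩

lemma kfold_nonempty {B : Finset (Sym2 V)} {k : ℕ} (hk : 1 ≤ k) (hB : IsKFoldCircuit d p B k) :
    B.Nonempty := by
  rw [← Finset.card_pos]
  have := hB.2
  omega

lemma one_to_two (hd : 2 ≤ d) (hp : Generic d p)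
    (D : Finset (Sym2 V)) (hsimple : ∀ e ∈ D, ¬ e.IsDiag) (hU : esupp D = Finset.univ)
    (hB : ∀ f ∈ D, rrk d p (↑D \ {f}) = rrk d p ↑D) (hne : D.Nonempty)
    (h : IsRigidOn d p Finset.univ D) :
    d + 1 ≤ Fintype.card V ∧ ∀ X : Finset V, X.card < d →
        ((SimpleGraph.fromEdgeSet (↑D : Set (Sym2 V))).induce {w : V | w ∉ X}).Connected := by
  classical
  have hc := card_esupp p hp D hsimple hB hne
  rw [← hU] at h
  have hrig := rigid_count p hp D hsimple hB hne h
  have hcV : (esupp D).card = Fintype.card V := by rw [hU, Finset.card_univ]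
  have hV : d + 1 ≤ Fintype.card V := by omega
  refine ⟨hV, fun X hX => ?_⟩
  obtain ⟨z, -, hz⟩ : ∃ z ∈ (Finset.univ : Finset V), z ∉ X :=
    Finset.exists_mem_notMem_of_card_lt_card (by rw [Finset.card_univ]; omega)
  haveI : Nonempty {w : V | w ∉ X} := ⟨⟨z, hz⟩⟩
  refine SimpleGraph.Connected.mk ?_
  intro u v
  by_contra hnr
  set H := (SimpleGraph.fromEdgeSet (↑D : Set (Sym2 V))).induce {w : V | w ∉ X} with hH
  let P : Finset V := Finset.univ.filter fun w => ∃ hw : w ∉ X, H.Reachable u ⟨w, hw⟩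
  have hmP : ∀ w, w ∈ P ↔ ∃ hw : w ∉ X, H.Reachable u ⟨w, hw⟩ := by intro w; simp [P]
  refine no_sep p hd hp hV D hsimple hB hrig X P hX ?_ u.1 v.1 (by rw [hU]; simp) ?_
    (by rw [hU]; simp) ?_ v.2
  · intro a b hab haP
    obtain ⟨ha, hr⟩ := (hmP a).1 haP
    by_cases hb : b ∈ X
    · exact Or.inr hb
    · left
      refine (hmP b).2 ⟨hb, hr.trans (SimpleGraph.Adj.reachable ?_)⟩
      rw [hH, SimpleGraph.induce_adj, SimpleGraph.fromEdgeSet_adj]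
      exact ⟨hab, fun h => hsimple _ hab (by simpa using h)⟩
  · exact (hmP _).2 ⟨u.2, SimpleGraph.Reachable.refl _⟩
  · intro h
    obtain ⟨_, h⟩ := (hmP _).1 h
    exact hnr h

theorem main
    (d k : ℕ) (hd : 2 ≤ d) (hk : 2 ≤ k)
    {V : Type*} [Fintype V] [DecidableEq V]
    (D : Finset (Sym2 V)) (hsimple : ∀ e ∈ D, ¬ e.IsDiag)
    (hcov : ∀ w : V, ∃ e ∈ D, w ∈ e)
    (p : V → Fin d → ℝ) (hp : Generic d p)
    (hD : IsKFoldCircuit d p D k)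
    (hrigidsub : ∀ B ⊆ D, IsKFoldCircuit d p B (k-1) → IsRigidOn d p (esupp B) B) :
    (IsRigidOn d p Finset.univ D ↔
      (d + 1 ≤ Fintype.card V ∧ ∀ X : Finset V, X.card < d →
        ((SimpleGraph.fromEdgeSet (↑D : Set (Sym2 V))).induce
          {w : V | w ∉ X}).Connected)) ∧
    ((d + 1 ≤ Fintype.card V ∧ ∀ X : Finset V, X.card < d →
        ((SimpleGraph.fromEdgeSet (↑D : Set (Sym2 V))).induce
          {w : V | w ∉ X}).Connected) ↔
      2 < Set.ncard {A : Finset (Sym2 V) | IsPrincipalPart d p D k A}) := by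
  have hne : D.Nonempty := kfold_nonempty p (by omega) hD
  have hU : esupp D = Finset.univ := by
    ext a; simp only [mem_esupp, Finset.mem_univ, iff_true]; exact hcov a
  have hcV : d + 2 ≤ Fintype.card V := by
    have := card_esupp p hp D hsimple hD.1 hne
    rwa [hU, Finset.card_univ] at this
  have hV : d + 1 ≤ Fintype.card V := by omega
  have h12 := one_to_two p hd hp D hsimple hU hD.1 hne
  have hsub : ∀ B ⊆ D, IsKFoldCircuit d p B (k-1) →
      (∀ e ∈ B, ¬ e.IsDiag) ∧ d + 2 ≤ (esupp B).card ∧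
      rrk d p (↑B) + (d + 1).choose 2 = d * (esupp B).card := by
    intro B hBD hB
    have hs : ∀ e ∈ B, ¬ e.IsDiag := fun e he => hsimple e (hBD he)
    have hn := kfold_nonempty p (by omega) hB
    exact ⟨hs, card_esupp p hp B hs hB.1 hn, rigid_count p hp B hs hB.1 hn (hrigidsub B hBD hB)⟩
  have hcover : ∀ B₁ B₂ : Finset (Sym2 V), B₁ ∪ B₂ = D → ∀ a, a ∈ esupp B₁ ∨ a ∈ esupp B₂ := by
    intro B₁ B₂ h a
    rw [← Finset.mem_union, ← esupp_union, h, hU]; simp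
  have h23 : (d + 1 ≤ Fintype.card V ∧ ∀ X : Finset V, X.card < d →
        ((SimpleGraph.fromEdgeSet (↑D : Set (Sym2 V))).induce
          {w : V | w ∉ X}).Connected) →
      2 < Set.ncard {A : Finset (Sym2 V) | IsPrincipalPart d p D k A} := by
    rintro ⟨-, hconn⟩
    obtain ⟨f, hf⟩ := hne
    obtain ⟨B₁, hB1, c1, hf1⟩ := exists_part p hk hD hf
    obtain ⟨g, hg⟩ := kfold_nonempty p (by omega) c1
    obtain ⟨B₂, hB2, c2, hg2⟩ := exists_part p hk hD (hB1 hg)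
    have hne12 : B₁ ≠ B₂ := by rintro rfl; exact hg2 hg
    have hun := union_eq p hk hD hB1 hB2 c1 c2 hne12
    have hinj : ∀ B ⊆ D, ∀ B' ⊆ D, D \ B = D \ B' → B = B' := by
      intro B hB B' hB' h
      rw [← Finset.sdiff_sdiff_eq_self hB, h, Finset.sdiff_sdiff_eq_self hB']
    rw [Set.two_lt_ncard_iff (Set.toFinite _)]
    by_cases hint : B₁ ∩ B₂ = ∅
    · exfalso
      obtain ⟨s1, n1, r1⟩ := hsub B₁ hB1 c1
      obtain ⟨s2, n2, r2⟩ := hsub B₂ hB2 c2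
      have hcard := Finset.card_union_add_card_inter B₁ B₂
      rw [hint, hun, Finset.card_empty] at hcard
      have hsm := rrk_submod p (↑B₁ : Set (Sym2 V)) ↑B₂
      rw [← Finset.coe_union, hun] at hsm
      have hVc := Finset.card_union_add_card_inter (esupp B₁) (esupp B₂)
      rw [← esupp_union, hun, hU, Finset.card_univ] at hVc
      have e0 := hD.2
      have e1 := c1.2
      have e2 := c2.2
      by_cases hX : (esupp B₁ ∩ esupp B₂).card < d
      · obtain ⟨a, haP, ha'⟩ : ∃ a ∈ esupp B₁, a ∉ esupp B₁ ∩ esupp B₂ :=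
          Finset.exists_mem_notMem_of_card_lt_card (by omega)
        obtain ⟨b, hbP, hb'⟩ : ∃ b ∈ esupp B₂, b ∉ esupp B₁ ∩ esupp B₂ :=
          Finset.exists_mem_notMem_of_card_lt_card (by omega)
        have hb1 : b ∉ esupp B₁ := fun h => hb' (Finset.mem_inter.2 ⟨h, hbP⟩)
        obtain ⟨w⟩ := (hconn _ hX).preconnected ⟨a, ha'⟩ ⟨b, hb'⟩
        obtain ⟨⟨⟨⟨x, hx'⟩, ⟨y, hy'⟩⟩, hxy⟩, -, hx, hy⟩ :=
          w.exists_boundary_dart {v | v.1 ∈ esupp B₁} haP hb1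
        simp only [Set.mem_setOf_eq] at hx hy
        rw [SimpleGraph.induce_adj, SimpleGraph.fromEdgeSet_adj] at hxy
        have hxyD : s(x, y) ∈ D := hxy.1
        rw [← hun, Finset.mem_union] at hxyD
        rcases hxyD with h | h
        · exact hy (mem_esupp.2 ⟨_, h, by simp⟩)
        · exact hx' (Finset.mem_inter.2 ⟨hx, mem_esupp.2 ⟨_, h, by simp⟩⟩)
      · push Not at hX
        have hle := rank_le p hd hp hV Finset.univ (by rw [Finset.card_univ]; omega) (↑D)
          (fun _ _ _ _ => Finset.mem_univ _)
        rw [Finset.card_univ] at hle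
        have hch : (d + 1).choose 2 * 2 = (d + 1) * d := by
          rw [Nat.choose_two_right]
          exact Nat.div_mul_cancel (Nat.even_mul_pred_self (d + 1)).two_dvd
        have hm := congrArg (d * ·) hVc
        simp only [mul_add] at hm
        have hdd : d * d ≤ d * (esupp B₁ ∩ esupp B₂).card := Nat.mul_le_mul_left d hX
        have hk2 : k = 2 := by omega
        have : d * d ≤ (d + 1).choose 2 := by omega
        nlinarith
    · obtain ⟨h, hh⟩ := Finset.nonempty_iff_ne_empty.2 hint
      obtain ⟨hh1, hh2⟩ := Finset.mem_inter.1 hh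
      obtain ⟨B₃, hB3, c3, hh3⟩ := exists_part p hk hD (hB1 hh1)
      refine ⟨D \ B₁, D \ B₂, D \ B₃, ⟨B₁, hB1, c1, rfl⟩, ⟨B₂, hB2, c2, rfl⟩, ⟨B₃, hB3, c3, rfl⟩,
        ?_, ?_, ?_⟩
      · exact fun h => hne12 (hinj _ hB1 _ hB2 h)
      · intro h
        have := hinj _ hB1 _ hB3 h
        subst this; exact hh3 hh1
      · intro h
        have := hinj _ hB2 _ hB3 h
        subst this; exact hh3 hh2
  have h31 : 2 < Set.ncard {A : Finset (Sym2 V) | IsPrincipalPart d p D k A} →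
      IsRigidOn d p Finset.univ D := by
    rw [Set.two_lt_ncard_iff (Set.toFinite _)]
    rintro ⟨_, _, _, ⟨B₁, hB1, c1, rfl⟩, ⟨B₂, hB2, c2, rfl⟩, ⟨B₃, hB3, c3, rfl⟩, h12, h13, h23⟩
    have u12 := union_eq p hk hD hB1 hB2 c1 c2 (by rintro rfl; exact h12 rfl)
    have u13 := union_eq p hk hD hB1 hB3 c1 c3 (by rintro rfl; exact h13 rfl)
    have u23 := union_eq p hk hD hB2 hB3 c2 c3 (by rintro rfl; exact h23 rfl)
    obtain ⟨s1, n1, r1⟩ := hsub B₁ hB1 c1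
    obtain ⟨s2, n2, r2⟩ := hsub B₂ hB2 c2
    obtain ⟨s3, n3, r3⟩ := hsub B₃ hB3 c3
    by_cases hX : (esupp B₁ ∩ esupp B₂).card < d
    · exfalso
      have key : (∀ a ∈ esupp B₃, a ∈ esupp B₂) ∨ (∀ b ∈ esupp B₃, b ∈ esupp B₁) := by
        by_contra hcon
        push Not at hcon
        obtain ⟨⟨a, ha3, ha2⟩, ⟨b, hb3, hb1⟩⟩ := hcon
        have ha1 : a ∈ esupp B₁ := (hcover _ _ u12 a).resolve_right ha2
        refine no_sep p hd hp hV B₃ s3 c3.1 r3 (esupp B₁ ∩ esupp B₂) (esupp B₁ \ esupp B₂) hX ?_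
          a b ha3 (Finset.mem_sdiff.2 ⟨ha1, ha2⟩) hb3
          (fun h => hb1 (Finset.mem_sdiff.1 h).1) (fun h => hb1 (Finset.mem_inter.1 h).1)
        intro x y hxy hx
        rw [Finset.mem_sdiff] at hx
        have hxyD := hB3 hxy
        rw [← u12, Finset.mem_union] at hxyD
        have hy : y ∈ esupp B₁ := by
          rcases hxyD with h | h
          · exact mem_esupp.2 ⟨_, h, by simp⟩
          · exact absurd (mem_esupp.2 ⟨_, h, by simp⟩) hx.2
        by_cases hy2 : y ∈ esupp B₂
        · exact Or.inr (Finset.mem_inter.2 ⟨hy, hy2⟩)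
        · exact Or.inl (Finset.mem_sdiff.2 ⟨hy, hy2⟩)
      rcases key with h | h
      · have : esupp B₁ ∩ esupp B₂ = esupp B₁ := Finset.inter_eq_left.2 fun a _ =>
          (hcover _ _ u23 a).elim id (h a)
        rw [this] at hX; omega
      · have : esupp B₁ ∩ esupp B₂ = esupp B₂ := Finset.inter_eq_right.2 fun a _ =>
          (hcover _ _ u13 a).elim id (h a)
        rw [this] at hX; omega
    · push Not at hX
      right
      have hsupp : ∀ B : Finset (Sym2 V), ∀ e ∈ (↑B : Set (Sym2 V)), ∀ a ∈ e, a ∈ esupp B :=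
        fun B e he a ha => mem_esupp.2 ⟨e, he, ha⟩
      have m1 := (rigid_iff p hd hp hV (esupp B₁) (by omega) ↑B₁ (hsupp B₁)).1 r1
      have m2 := (rigid_iff p hd hp hV (esupp B₂) (by omega) ↑B₂ (hsupp B₂)).1 r2
      have := (rigid_iff p hd hp hV Finset.univ (by rw [Finset.card_univ]; omega) (↑D)
          (fun _ _ _ _ => Finset.mem_univ _)).2 (by
        intro x hx
        obtain ⟨c, hc⟩ := m1 x (fun e he => hx e (hB1 he))
        obtain ⟨c', hc'⟩ := m2 x (fun e he => hx e (hB2 he))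
        have hcc : c - c' = 0 := by
          apply triv_vanish p hd hp hV (c - c') _ hX
          intro v hv i
          rw [Finset.mem_inter] at hv
          rw [map_sub, Pi.sub_apply, ← hc v hv.1, ← hc' v hv.2, sub_self]
        rw [sub_eq_zero] at hcc
        subst hcc
        exact ⟨c, fun v _ i => (hcover _ _ u12 v).elim (fun h => hc v h i) (fun h => hc' v h i)⟩)
      exact_mod_cast this
  exact ⟨⟨h12, fun h => h31 (h23 h)⟩, ⟨h23, fun h => h12 (h31 h)⟩⟩

end KFold

/-- Lemma 3.15: for a `k`-fold `R_d`-circuit all of whose `(k-1)`-fold circuits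
are `R_d`-rigid, rigidity, `d`-connectivity and having more than two parts in the
principal partition are equivalent. -/
theorem kfold_circuit_rigid_iff_dconnected_iff_manyParts
    (d k : ℕ) (hd : 2 ≤ d) (hk : 2 ≤ k)
    {V : Type*} [Fintype V] [DecidableEq V]
    (D : Finset (Sym2 V)) (hsimple : ∀ e ∈ D, ¬ e.IsDiag)
    (hcov : ∀ w : V, ∃ e ∈ D, w ∈ e)
    (p : V → Fin d → ℝ) (hp : Generic d p)
    (hD : IsKFoldCircuit d p D k)
    (hrigidsub : ∀ B ⊆ D, IsKFoldCircuit d p B (k-1) → IsRigidOn d p (esupp B) B) :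
    (IsRigidOn d p Finset.univ D ↔
      (d + 1 ≤ Fintype.card V ∧ ∀ X : Finset V, X.card < d →
        ((SimpleGraph.fromEdgeSet (↑D : Set (Sym2 V))).induce
          {w : V | w ∉ X}).Connected)) ∧
    ((d + 1 ≤ Fintype.card V ∧ ∀ X : Finset V, X.card < d →
        ((SimpleGraph.fromEdgeSet (↑D : Set (Sym2 V))).induce
          {w : V | w ∉ X}).Connected) ↔
      2 < Set.ncard {A : Finset (Sym2 V) | IsPrincipalPart d p D k A}) := by
  exact KFold.main d k hd hk D hsimple hcov p hp hD hrigidsub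
end

section
/- Let d ≥ 1 and k ≥ 1, and let G = (V,E) be a graph with no isolated vertices whose edge set E is a k-fold R_d-circuit such that for every nonempty (k−1)-fold R_d-circuit B contained in E, the graph (V(B), B) is R_d-rigid. Then E is a balanced k-fold R_d-circuit. -/
open scoped BigOperators

section LinPart
variable {α : Type*} [Fintype α] [DecidableEq α] {M : Type*} [AddCommGroup M] [Module ℝ M]

/-- rank-nullity for a linear map restricted to a submodule -/
theorem kf_ranknull {X Y : Type*} [AddCommGroup X] [Module ℝ X] [AddCommGroup Y] [Module ℝ Y]
    [FiniteDimensional ℝ X] (f : X →ₗ[ℝ] Y) (L : Submodule ℝ X) :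
    Module.finrank ℝ (L.map f) + Module.finrank ℝ (L ⊓ LinearMap.ker f : Submodule ℝ X)
      = Module.finrank ℝ L := by
  have h := LinearMap.finrank_range_add_finrank_ker (f.domRestrict L)
  rw [LinearMap.range_domRestrict] at h
  have h2 : Module.finrank ℝ (LinearMap.ker (f.domRestrict L))
      = Module.finrank ℝ (L ⊓ LinearMap.ker f : Submodule ℝ X) := by
    rw [← Submodule.finrank_map_subtype_eq]
    have h3 : Submodule.map L.subtype (LinearMap.ker (f.domRestrict L)) = L ⊓ LinearMap.ker f := by
      rw [LinearMap.ker_domRestrict, Submodule.map_comap_subtype]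
    rw [h3]
  omega

/-- the space of stresses supported on `F` -/
noncomputable def kfStress (r : α → M) (F : Set α) : Submodule ℝ (α →₀ ℝ) :=
  Finsupp.supported ℝ ℝ F ⊓ LinearMap.ker (Finsupp.linearCombination ℝ r)

theorem kf_mem_stress {r : α → M} {F : Set α} {s : α →₀ ℝ} :
    s ∈ kfStress r F ↔ (∀ e, e ∉ F → s e = 0) ∧ Finsupp.linearCombination ℝ r s = 0 := by
  rw [kfStress, Submodule.mem_inf, LinearMap.mem_ker, Finsupp.mem_supported']

theorem kf_finrank_supported (F : Finset α) :
    Module.finrank ℝ (Finsupp.supported ℝ ℝ (F : Set α)) = F.card := by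
  rw [(Finsupp.supportedEquivFinsupp (M := ℝ) (R := ℝ) (F : Set α)).finrank_eq]
  simp

theorem kf_nullity (r : α → M) (F : Finset α) :
    Module.finrank ℝ (Submodule.span ℝ (r '' (F : Set α))) +
      Module.finrank ℝ (kfStress r (F : Set α)) = F.card := by
  rw [Finsupp.span_image_eq_map_linearCombination, kfStress, kf_ranknull, kf_finrank_supported]

theorem kf_mem_span_iff (r : α → M) (F : Set α) (f : α) (hf : f ∈ F) :
    r f ∈ Submodule.span ℝ (r '' (F \ {f})) ↔ ∃ s ∈ kfStress r F, s f ≠ 0 := by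
  rw [Finsupp.mem_span_image_iff_linearCombination]
  constructor
  · rintro ⟨l, hl, hlr⟩
    rw [Finsupp.mem_supported'] at hl
    refine ⟨l - Finsupp.single f 1, ?_, ?_⟩
    · rw [kf_mem_stress]
      constructor
      · intro e he
        have : f ≠ e := by rintro rfl; exact he hf
        simp [Finsupp.single_apply, this, hl e (fun h => he h.1)]
      · simp [hlr]
    · simp [hl f (by simp)]
  · rintro ⟨s, hs, hsf⟩
    rw [kf_mem_stress] at hs
    refine ⟨Finsupp.single f 1 - (s f)⁻¹ • s, ?_, ?_⟩
    · rw [Finsupp.mem_supported']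
      intro e he
      by_cases hfe : f = e
      · subst hfe; simp [hsf]
      · have : e ∉ F := fun h => he ⟨h, fun h' => hfe h'.symm⟩
        simp [Finsupp.single_apply, hfe, hs.1 e this]
    · simp [hs.2]

theorem kf_finrank_insert [FiniteDimensional ℝ M] (r : α → M) (F G : Set α) (h : F ⊆ G)
    (hr : Module.finrank ℝ (Submodule.span ℝ (r '' F)) =
      Module.finrank ℝ (Submodule.span ℝ (r '' G))) :
    Submodule.span ℝ (r '' F) = Submodule.span ℝ (r '' G) :=
  Submodule.eq_of_le_of_finrank_le (Submodule.span_mono (Set.image_mono h)) hr.ge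

theorem kf_coloop_iff [FiniteDimensional ℝ M] (r : α → M) (F : Set α) (f : α) (hf : f ∈ F) :
    Module.finrank ℝ (Submodule.span ℝ (r '' (F \ {f}))) =
      Module.finrank ℝ (Submodule.span ℝ (r '' F)) ↔ ∃ s ∈ kfStress r F, s f ≠ 0 := by
  rw [← kf_mem_span_iff r F f hf]
  constructor
  · intro h
    rw [kf_finrank_insert r _ _ Set.sdiff_subset h]
    exact Submodule.subset_span ⟨f, hf, rfl⟩
  · intro h
    suffices hsp : Submodule.span ℝ (r '' (F \ {f})) = Submodule.span ℝ (r '' F) by rw [hsp]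
    apply le_antisymm
    · exact Submodule.span_mono (Set.image_mono Set.sdiff_subset)
    · rw [Submodule.span_le]
      rintro _ ⟨e, he, rfl⟩
      by_cases hef : e = f
      · subst hef; exact h
      · exact Submodule.subset_span ⟨e, ⟨he, hef⟩, rfl⟩

/-- abstract k-fold circuit -/
def kfCirc (r : α → M) (D : Finset α) (k : ℕ) : Prop :=
  (∀ f ∈ D, ∃ s ∈ kfStress r (D : Set α), s f ≠ 0) ∧
    Module.finrank ℝ (kfStress r (D : Set α)) = k

/-- stresses vanishing at `e` -/
noncomputable def kfK (r : α → M) (D : Finset α) (e : α) : Submodule ℝ (α →₀ ℝ) :=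
  kfStress r (D : Set α) ⊓ LinearMap.ker (Finsupp.lapply e : (α →₀ ℝ) →ₗ[ℝ] ℝ)

theorem kf_mem_K {r : α → M} {D : Finset α} {e : α} {s : α →₀ ℝ} :
    s ∈ kfK r D e ↔ s ∈ kfStress r (D : Set α) ∧ s e = 0 := by
  rw [kfK, Submodule.mem_inf, LinearMap.mem_ker, Finsupp.lapply_apply]

theorem kf_finrank_K (r : α → M) (D : Finset α) (k : ℕ) (hD : kfCirc r D k) (e : α)
    (he : e ∈ D) : Module.finrank ℝ (kfK r D e) + 1 = k := by
  have h := kf_ranknull (Finsupp.lapply e : (α →₀ ℝ) →ₗ[ℝ] ℝ) (kfStress r (D : Set α))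
  have h2 : (kfStress r (D : Set α)).map (Finsupp.lapply e : (α →₀ ℝ) →ₗ[ℝ] ℝ) = ⊤ := by
    obtain ⟨s, hs, hse⟩ := hD.1 e he
    rw [eq_top_iff]
    intro x _
    refine ⟨(x * (s e)⁻¹) • s, Submodule.smul_mem _ _ hs, ?_⟩
    simp [hse]
  rw [h2, hD.2] at h
  simp only [finrank_top, Module.finrank_self] at h
  rw [kfK]
  omega

open Classical in
/-- principal part of `e` -/
noncomputable def kfA (r : α → M) (D : Finset α) (e : α) : Finset α :=
  D.filter fun f => kfK r D e ≤ kfK r D f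

theorem kf_mem_A {r : α → M} {D : Finset α} {e f : α} :
    f ∈ kfA r D e ↔ f ∈ D ∧ kfK r D e ≤ kfK r D f := by
  simp [kfA]

theorem kf_K_eq {r : α → M} {D : Finset α} {k : ℕ} (hD : kfCirc r D k) {e f : α}
    (he : e ∈ D) (h : f ∈ kfA r D e) : kfK r D e = kfK r D f := by
  rw [kf_mem_A] at h
  have h1 := kf_finrank_K r D k hD e he
  have h2 := kf_finrank_K r D k hD f h.1
  exact Submodule.eq_of_le_of_finrank_le h.2 (by omega)

theorem kf_A_eq {r : α → M} {D : Finset α} {k : ℕ} (hD : kfCirc r D k) {e f : α}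
    (he : e ∈ D) (h : f ∈ kfA r D e) : kfA r D e = kfA r D f := by
  ext x
  rw [kf_mem_A, kf_mem_A, kf_K_eq hD he h]

theorem kf_stress_sdiff (r : α → M) (D : Finset α) (e : α) (he : e ∈ D) :
    kfStress r ((D \ kfA r D e : Finset α) : Set α) = kfK r D e := by
  ext s
  rw [kf_mem_K, kf_mem_stress, kf_mem_stress]
  constructor
  · rintro ⟨h1, h2⟩
    refine ⟨⟨fun x hx => h1 x ?_, h2⟩, h1 e ?_⟩
    · intro hx'; apply hx; simp at hx'; simpa using hx'.1
    · simp [kf_mem_A, he]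
  · rintro ⟨⟨h1, h2⟩, h3⟩
    refine ⟨fun x hx => ?_, h2⟩
    by_cases hxD : x ∈ D
    · have : x ∈ kfA r D e := by
        by_contra h
        exact hx (by simp [hxD, h])
      have hs : s ∈ kfK r D e := kf_mem_K.2 ⟨kf_mem_stress.2 ⟨h1, h2⟩, h3⟩
      exact (kf_mem_K.1 ((kf_mem_A.1 this).2 hs)).2
    · exact h1 x (by simpa using hxD)

theorem kf_parts (r : α → M) (D : Finset α) (k : ℕ) (hk : 1 ≤ k) (hD : kfCirc r D k)
    (A : Finset α) : (∃ B ⊆ D, kfCirc r B (k - 1) ∧ A = D \ B) ↔ ∃ e ∈ D, A = kfA r D e := by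
  constructor
  · rintro ⟨B, hBD, hB, rfl⟩
    have hle : kfStress r (B : Set α) ≤ kfStress r (D : Set α) := by
      intro s hs
      rw [kf_mem_stress] at hs ⊢
      exact ⟨fun e he => hs.1 e (fun h => he (by simpa using hBD (by simpa using h))), hs.2⟩
    have hne : ∃ e ∈ D, e ∉ B := by
      by_contra! hcon
      have : B = D := subset_antisymm hBD hcon
      subst this
      have h1 := hB.2
      have h2 := hD.2
      omega
    obtain ⟨e, heD, heB⟩ := hne
    have hBK : kfStress r (B : Set α) = kfK r D e := by
      apply Submodule.eq_of_le_of_finrank_le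
      · intro s hs
        exact kf_mem_K.2 ⟨hle hs, (kf_mem_stress.1 hs).1 e (by simpa using heB)⟩
      · have h1 := hB.2
        have := kf_finrank_K r D k hD e heD
        omega
    refine ⟨e, heD, ?_⟩
    ext f
    rw [Finset.mem_sdiff, kf_mem_A]
    refine and_congr_right fun hfD => ?_
    constructor
    · intro hfB s hs
      refine kf_mem_K.2 ⟨(kf_mem_K.1 hs).1, ?_⟩
      rw [← hBK] at hs
      exact (kf_mem_stress.1 hs).1 f (by simpa using hfB)
    · intro h hfB
      obtain ⟨s, hs, hsf⟩ := hB.1 f hfB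
      rw [hBK] at hs
      exact hsf (kf_mem_K.1 (h hs)).2
  · rintro ⟨e, he, rfl⟩
    refine ⟨D \ kfA r D e, Finset.sdiff_subset, ⟨?_, ?_⟩, ?_⟩
    · intro f hf
      rw [Finset.mem_sdiff, kf_mem_A] at hf
      have : ¬ kfK r D e ≤ kfK r D f := fun h => hf.2 ⟨hf.1, h⟩
      obtain ⟨s, hs, hsf⟩ := SetLike.not_le_iff_exists.1 this
      rw [kf_stress_sdiff r D e he]
      exact ⟨s, hs, fun h => hsf (kf_mem_K.2 ⟨(kf_mem_K.1 hs).1, h⟩)⟩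
    · rw [kf_stress_sdiff r D e he]
      have := kf_finrank_K r D k hD e he
      omega
    · rw [Finset.sdiff_sdiff_eq_self]
      exact fun x hx => (kf_mem_A.1 hx).1

theorem kf_dim (r : α → M) (D : Finset α) (k : ℕ) (hk : 1 ≤ k) (hD : kfCirc r D k)
    (X : Submodule ℝ M)
    (hX : ∀ x, x ∈ X ↔ ∀ e ∈ D, x ∈ Submodule.span ℝ (r '' ((D \ kfA r D e : Finset α) : Set α))) :
    Module.finrank ℝ X + k = (D.image (kfA r D)).card := by
  have hDne : D.Nonempty := by
    by_contra hcon
    rw [Finset.not_nonempty_iff_eq_empty] at hcon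
    subst hcon
    have h1 := kf_nullity r (∅ : Finset α)
    have h2 := hD.2
    simp only [Finset.card_empty] at h1
    omega
  set L := Finsupp.linearCombination ℝ r with hL
  set Y : Submodule ℝ (α →₀ ℝ) := Finsupp.supported ℝ ℝ (D : Set α) ⊓ X.comap L with hY
  have hmap : Y.map L = X := by
    ext x
    constructor
    · rintro ⟨c, hc, rfl⟩
      exact hc.2
    · intro hx
      obtain ⟨e, he⟩ := hDne
      have h1 := (hX x).1 hx e he
      rw [Finsupp.mem_span_image_iff_linearCombination] at h1
      obtain ⟨l, hl, rfl⟩ := h1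
      exact ⟨l, ⟨Finsupp.supported_mono (by simp) hl, hx⟩, rfl⟩
  have hker : Y ⊓ LinearMap.ker L = kfStress r (D : Set α) := by
    ext s
    simp only [hY, kfStress, Submodule.mem_inf, Submodule.mem_comap, LinearMap.mem_ker, ← hL]
    constructor
    · rintro ⟨⟨h1, _⟩, h2⟩; exact ⟨h1, h2⟩
    · rintro ⟨h1, h2⟩; exact ⟨⟨h1, by rw [h2]; exact X.zero_mem⟩, h2⟩
  have hrn := kf_ranknull L Y
  rw [hmap, hker, hD.2] at hrn
  rw [hrn]
  -- representatives
  have hrep : ∀ P : {P // P ∈ D.image (kfA r D)}, ∃ e ∈ D, kfA r D e = P.1 := fun P =>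
    Finset.mem_image.1 P.2
  choose rep hrepD hrepA using hrep
  have hs : ∀ P : {P // P ∈ D.image (kfA r D)}, ∃ s ∈ kfStress r (D : Set α), s (rep P) = 1 := by
    intro P
    obtain ⟨s, hs, hs1⟩ := hD.1 _ (hrepD P)
    exact ⟨(s (rep P))⁻¹ • s, Submodule.smul_mem _ _ hs, by simp [hs1]⟩
  choose σ hσ hσ1 using hs
  let part : {e // e ∈ D} → {P // P ∈ D.image (kfA r D)} :=
    fun e => ⟨kfA r D e.1, Finset.mem_image_of_mem _ e.2⟩
  have hpart : ∀ P f (hf : f ∈ kfA r D (rep P)), part ⟨f, (kf_mem_A.1 hf).1⟩ = P := by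
    intro P f hf
    apply Subtype.ext
    change kfA r D f = P.1
    rw [← kf_A_eq hD (hrepD P) hf, hrepA]
  have hmemA : ∀ f : {e // e ∈ D}, f.1 ∈ kfA r D (rep (part f)) := by
    intro f
    rw [hrepA]
    change f.1 ∈ kfA r D f.1
    exact kf_mem_A.2 ⟨f.2, le_rfl⟩
  let Ψ : ({P // P ∈ D.image (kfA r D)} → ℝ) →ₗ[ℝ] (α →₀ ℝ) :=
    (Finsupp.linearEquivFunOnFinite ℝ ℝ α).symm.toLinearMap ∘ₗ
      LinearMap.pi (fun f => if h : f ∈ D then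
        (σ (part ⟨f, h⟩) f) • LinearMap.proj (part ⟨f, h⟩) else 0)
  have hΨ : ∀ a f (h : f ∈ D), Ψ a f = σ (part ⟨f, h⟩) f * a (part ⟨f, h⟩) := by
    intro a f h
    simp [Ψ, h]
  have hΨ0 : ∀ a f (h : f ∉ D), Ψ a f = 0 := by
    intro a f h
    simp [Ψ, h]
  have hinj : Function.Injective Ψ := by
    rw [← LinearMap.ker_eq_bot, LinearMap.ker_eq_bot']
    intro a ha
    funext P
    have h1 := hΨ a (rep P) (hrepD P)
    have h2 : part ⟨rep P, hrepD P⟩ = P := Subtype.ext (hrepA P)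
    rw [h2, hσ1, one_mul, ha] at h1
    simpa using h1.symm
  have hrange : LinearMap.range Ψ = Y := by
    ext c
    constructor
    · rintro ⟨a, rfl⟩
      refine ⟨?_, ?_⟩
      · change _ ∈ Finsupp.supported ℝ ℝ (D : Set α)
        rw [Finsupp.mem_supported']
        intro f hf
        exact hΨ0 a f (by simpa using hf)
      · change L (Ψ a) ∈ X
        rw [hX]
        intro e he
        rw [Finsupp.mem_span_image_iff_linearCombination]
        set P := part ⟨e, he⟩ with hP
        refine ⟨Ψ a - a P • σ P, ?_, ?_⟩
        · rw [Finsupp.mem_supported']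
          intro f hf
          by_cases hfD : f ∈ D
          · have hfA : f ∈ kfA r D (rep P) := by
              rw [hrepA]
              change f ∈ kfA r D e
              by_contra h
              exact hf (by simp [hfD, h])
            have := hpart P f hfA
            rw [Finsupp.sub_apply, hΨ a f hfD, this]
            simp [mul_comm]
          · rw [Finsupp.sub_apply, hΨ0 a f hfD]
            simp [(kf_mem_stress.1 (hσ P)).1 f (by simpa using hfD)]
        · rw [map_sub, map_smul, (kf_mem_stress.1 (hσ P)).2]
          simp [hL]
    · rintro ⟨hc1, hc2⟩
      change L c ∈ X at hc2
      change c ∈ Finsupp.supported ℝ ℝ (D : Set α) at hc1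
      rw [Finsupp.mem_supported'] at hc1
      refine ⟨fun P => c (rep P), ?_⟩
      ext f
      by_cases hfD : f ∈ D
      · rw [hΨ _ f hfD]
        set P := part ⟨f, hfD⟩ with hP
        have h1 := (hX _).1 hc2 (rep P) (hrepD P)
        rw [Finsupp.mem_span_image_iff_linearCombination] at h1
        obtain ⟨l, hl, hlc⟩ := h1
        rw [Finsupp.mem_supported'] at hl
        have hfA : f ∈ kfA r D (rep P) := hmemA ⟨f, hfD⟩
        have hrA : rep P ∈ kfA r D (rep P) := kf_mem_A.2 ⟨hrepD P, le_rfl⟩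
        have hlf : l f = 0 := hl f (by simp [hfA])
        have hlr : l (rep P) = 0 := hl _ (by simp [hrA])
        have hst : c - l ∈ kfStress r (D : Set α) := by
          rw [kf_mem_stress]
          refine ⟨fun x hx => ?_, ?_⟩
          · rw [Finsupp.sub_apply, hc1 x hx, hl x (fun h => hx (by
              rw [Finset.coe_sdiff] at h; exact h.1))]
            simp
          · rw [map_sub, hlc, sub_self]
        have hK : (c - l) - c (rep P) • σ P ∈ kfK r D (rep P) := by
          rw [kf_mem_K]
          refine ⟨Submodule.sub_mem _ hst (Submodule.smul_mem _ _ (hσ P)), ?_⟩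
          simp [hσ1, hlr]
        have h3 := (kf_mem_K.1 ((kf_mem_A.1 hfA).2 hK)).2
        simp [hlf] at h3
        linarith
      · rw [hΨ0 _ f hfD, hc1 f (by simpa using hfD)]
  rw [← hrange, LinearMap.finrank_range_of_inj hinj, Module.finrank_fintype_fun_eq_card, Fintype.card_coe]
end LinPart

section GeoPart
variable {d : ℕ} {V : Type*} [Fintype V] [DecidableEq V]

theorem kg_li (p : V → Fin d → ℝ) (hp : Generic d p) (v : V) (s : Finset V) (hv : v ∉ s)
    (hs : s.card ≤ d) : LinearIndependent ℝ (fun w : s => p w - p v) := by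
  obtain ⟨e⟩ : Nonempty (s ↪ Fin d) := Function.Embedding.nonempty_of_card_le (by simpa using hs)
  let Q : Matrix s s (MvPolynomial (V × Fin d) ℚ) :=
    fun w w' => MvPolynomial.X (w.1, e w') - MvPolynomial.X (v, e w')
  have hQ : Q.det ≠ 0 := by
    intro h
    let q : V × Fin d → ℚ := fun x => if h : x.1 ∈ s then (if e ⟨x.1, h⟩ = x.2 then 1 else 0) else 0
    have h1 := congrArg (MvPolynomial.aeval q) h
    rw [AlgHom.map_det, map_zero] at h1
    have h2 : (MvPolynomial.aeval q).mapMatrix Q = (1 : Matrix s s ℚ) := by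
      ext w w'
      rw [AlgHom.mapMatrix_apply, Matrix.map_apply]
      simp [Q, q, hv, Matrix.one_apply]
    rw [h2, Matrix.det_one] at h1
    exact one_ne_zero h1
  have hdet : (MvPolynomial.aeval (fun vi : V × Fin d => p vi.1 vi.2) : _ →ₐ[ℚ] ℝ) Q.det ≠ 0 := by
    intro h
    apply hQ
    have hinj : Function.Injective
      (MvPolynomial.aeval (fun vi : V × Fin d => p vi.1 vi.2) : MvPolynomial (V × Fin d) ℚ →ₐ[ℚ] ℝ) := hp
    exact hinj (by rw [h, map_zero])
  rw [AlgHom.map_det] at hdet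
  have h3 := Matrix.linearIndependent_rows_of_det_ne_zero hdet
  apply LinearIndependent.of_comp (LinearMap.funLeft ℝ ℝ e)
  have h4 : (fun i => (MvPolynomial.aeval (fun vi : V × Fin d => p vi.1 vi.2) :
      _ →ₐ[ℚ] ℝ).mapMatrix Q i) = (LinearMap.funLeft ℝ ℝ e) ∘ fun w : s => p w - p v := by
    funext w
    funext w'
    rw [AlgHom.mapMatrix_apply, Matrix.map_apply]
    simp [Q, LinearMap.funLeft_apply]
  rw [h4] at h3
  exact h3

theorem kg_func {n : Type*} [Fintype n] [DecidableEq n] (f : (n → ℝ) →ₗ[ℝ] ℝ) :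
    ∃ h : n → ℝ, ∀ x, f x = h ⬝ᵥ x := by
  refine ⟨fun i => f fun j => if i = j then 1 else 0, fun x => ?_⟩
  rw [LinearMap.pi_apply_eq_sum_univ f x]
  simp [dotProduct, mul_comm]

theorem kg_solve {ι : Type*} [Fintype ι] (q : ι → Fin d → ℝ) (hq : LinearIndependent ℝ q)
    (a : ι → ℝ) : ∃ h : Fin d → ℝ, ∀ i, h ⬝ᵥ q i = a i := by
  classical
  obtain ⟨g, hg⟩ := LinearMap.exists_leftInverse_of_injective (Fintype.linearCombination ℝ q)
    (by rw [LinearMap.ker_eq_bot]; exact hq.fintypeLinearCombination_injective)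
  obtain ⟨h, hh⟩ := kg_func ((Fintype.linearCombination ℝ a) ∘ₗ g)
  refine ⟨h, fun i => ?_⟩
  rw [← hh]
  have h1 := LinearMap.congr_fun hg (Pi.single i 1)
  simp [Fintype.linearCombination_apply_single] at h1
  simp [h1, Fintype.linearCombination_apply_single]

theorem kg_skew {ι : Type*} [Fintype ι] (q u : ι → Fin d → ℝ) (hq : LinearIndependent ℝ q)
    (hu : ∀ i j, u i ⬝ᵥ q j + u j ⬝ᵥ q i = 0) :
    ∃ S : (Fin d → ℝ) →ₗ[ℝ] (Fin d → ℝ), (∀ x, S x ⬝ᵥ x = 0) ∧ ∀ i, S (q i) = u i := by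
  classical
  have hex : ∀ i, ∃ h : Fin d → ℝ, ∀ j, h ⬝ᵥ q j = if i = j then 1 else 0 :=
    fun i => kg_solve q hq _
  choose h hh using hex
  let P : (Fin d → ℝ) → (Fin d → ℝ) := fun x => ∑ i, (h i ⬝ᵥ x) • q i
  have hPadd : ∀ x y, P (x + y) = P x + P y := by
    intro x y
    simp [P, dotProduct_add, add_smul, Finset.sum_add_distrib]
  have hPsmul : ∀ (c : ℝ) x, P (c • x) = c • P x := by
    intro c x
    simp [P, Finset.smul_sum, smul_smul]
  have hPq : ∀ j, P (q j) = q j := by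
    intro j
    simp [P, hh]
  refine ⟨{ toFun := fun x => ∑ i, (h i ⬝ᵥ x) • u i - ∑ i, (u i ⬝ᵥ (x - P x)) • h i
            map_add' := ?_
            map_smul' := ?_ }, ?_, ?_⟩
  · intro x y
    have : x + y - (P x + P y) = (x - P x) + (y - P y) := by abel
    simp only [hPadd, this, dotProduct_add, add_smul, Finset.sum_add_distrib]
    abel
  · intro c x
    simp only [hPsmul, ← smul_sub, dotProduct_smul, smul_eq_mul, ← smul_smul, ← Finset.smul_sum,
      RingHom.id_apply]
  · intro x
    simp only [LinearMap.coe_mk, AddHom.coe_mk, sub_dotProduct, sum_dotProduct, smul_dotProduct,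
      dotProduct_sub, smul_eq_mul]
    have h1 : ∑ i, (h i ⬝ᵥ x) * (u i ⬝ᵥ P x) = 0 := by
      have h2 : ∀ i, (h i ⬝ᵥ x) * (u i ⬝ᵥ P x) = ∑ j, (h i ⬝ᵥ x) * (h j ⬝ᵥ x) * (u i ⬝ᵥ q j) := by
        intro i
        simp only [P, dotProduct_sum, dotProduct_smul, smul_eq_mul, Finset.mul_sum]
        exact Finset.sum_congr rfl fun j _ => by ring
      simp only [h2]
      have h3 : ∑ i, ∑ j, (h i ⬝ᵥ x) * (h j ⬝ᵥ x) * (u i ⬝ᵥ q j) =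
          ∑ i, ∑ j, -((h i ⬝ᵥ x) * (h j ⬝ᵥ x) * (u i ⬝ᵥ q j)) := by
        conv_lhs => rw [Finset.sum_comm]
        refine Finset.sum_congr rfl fun i _ => Finset.sum_congr rfl fun j _ => ?_
        linear_combination (h i ⬝ᵥ x) * (h j ⬝ᵥ x) * hu i j
      simp only [Finset.sum_neg_distrib] at h3
      linarith
    rw [← Finset.sum_sub_distrib, ← h1]
    refine Finset.sum_congr rfl fun i _ => ?_
    ring
  · intro j
    simp [hPq, hh]

theorem kg_ext_small (p : V → Fin d → ℝ) (hp : Generic d p) (W : Finset V) (hW : W.card ≤ d)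
    (m : V → Fin d → ℝ) (hm : ∀ u ∈ W, ∀ v ∈ W, (m u - m v) ⬝ᵥ (p u - p v) = 0) :
    ∃ t : (Fin d → ℝ) → Fin d → ℝ, (∀ x y, (t x - t y) ⬝ᵥ (x - y) = 0) ∧ ∀ w ∈ W, t (p w) = m w := by
  rcases W.eq_empty_or_nonempty with rfl | ⟨w0, hw0⟩
  · exact ⟨fun _ => 0, by simp, by simp⟩
  have hli := kg_li p hp w0 (W.erase w0) (by simp) ((Finset.card_erase_le).trans hW)
  obtain ⟨S, hS, hSq⟩ := kg_skew _ (fun w : W.erase w0 => m w - m w0) hli (by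
    rintro ⟨i, hi⟩ ⟨j, hj⟩
    rw [Finset.mem_erase] at hi hj
    have h1 := hm i hi.2 j hj.2
    have h2 := hm i hi.2 w0 hw0
    have h3 := hm j hj.2 w0 hw0
    simp only [sub_dotProduct, dotProduct_sub] at *
    linarith)
  refine ⟨fun x => m w0 + S (x - p w0), ?_, ?_⟩
  · intro x y
    have : m w0 + S (x - p w0) - (m w0 + S (y - p w0)) = S (x - y) := by
      simp only [map_sub]; abel
    rw [this, hS]
  · intro w hw
    by_cases h : w = w0
    · subst h; simp
    · have := hSq ⟨w, Finset.mem_erase.2 ⟨h, hw⟩⟩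
      simp only at this
      simp only [this]; abel

theorem kg_zero (p : V → Fin d → ℝ) (hp : Generic d p) (v : V) (W : Finset V) (hv : v ∉ W)
    (hW : W.card = d) (x : Fin d → ℝ) (hx : ∀ w ∈ W, x ⬝ᵥ (p w - p v) = 0) : x = 0 := by
  have hli := kg_li p hp v W hv hW.le
  rcases Nat.eq_zero_or_pos d with h0 | h0
  · subst h0; exact Subsingleton.elim _ _
  have hne : Nonempty W := by
    rw [nonempty_subtype]; exact Finset.card_pos.1 (by omega)
  have hsp := hli.span_eq_top_of_card_eq_finrank (by simp [hW])
  have hmem : x ∈ Submodule.span ℝ (Set.range fun w : W => p w - p v) := by rw [hsp]; trivial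
  have : ∀ y ∈ Submodule.span ℝ (Set.range fun w : W => p w - p v), x ⬝ᵥ y = 0 := by
    intro y hy
    induction hy using Submodule.span_induction with
    | mem y hy => obtain ⟨w, rfl⟩ := hy; exact hx w.1 w.2
    | zero => simp
    | add a b _ _ ha hb => rw [dotProduct_add, ha, hb, add_zero]
    | smul c a _ ha => rw [dotProduct_smul, ha, smul_zero]
  exact dotProduct_self_eq_zero.1 (this x hmem)

theorem kg_ext_cross (p : V → Fin d → ℝ) (hp : Generic d p) (W0 : Finset V)
    (hW0 : W0.card = d) (W : Finset V)
    (m : V → Fin d → ℝ) (hm : ∀ u ∈ W0, ∀ v ∈ W0, (m u - m v) ⬝ᵥ (p u - p v) = 0)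
    (hc : ∀ u ∈ W, u ∉ W0 → ∀ v ∈ W0, (m u - m v) ⬝ᵥ (p u - p v) = 0) :
    ∃ t : (Fin d → ℝ) → Fin d → ℝ, (∀ x y, (t x - t y) ⬝ᵥ (x - y) = 0) ∧ ∀ w ∈ W, t (p w) = m w := by
  obtain ⟨t, ht, htm⟩ := kg_ext_small p hp W0 hW0.le m hm
  refine ⟨t, ht, fun w hw => ?_⟩
  by_cases h : w ∈ W0
  · exact htm w h
  rw [← sub_eq_zero]
  apply kg_zero p hp w W0 h hW0
  intro v hv
  have h1 := hc w hw h v hv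
  have h2 := ht (p w) (p v)
  rw [htm v hv] at h2
  simp only [sub_dotProduct, dotProduct_sub] at *
  linarith

theorem kg_ext (p : V → Fin d → ℝ) (hp : Generic d p) (W : Finset V)
    (m : V → Fin d → ℝ) (hm : ∀ u ∈ W, ∀ v ∈ W, (m u - m v) ⬝ᵥ (p u - p v) = 0) :
    ∃ t : (Fin d → ℝ) → Fin d → ℝ, (∀ x y, (t x - t y) ⬝ᵥ (x - y) = 0) ∧ ∀ w ∈ W, t (p w) = m w := by
  by_cases hW : W.card ≤ d
  · exact kg_ext_small p hp W hW m hm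
  · obtain ⟨W0, h0, hc⟩ := Finset.exists_subset_card_eq (show d ≤ W.card by omega)
    exact kg_ext_cross p hp W0 hc W m (fun u hu v hv => hm u (h0 hu) v (h0 hv))
      (fun u hu _ v hv => hm u hu v (h0 hv))

theorem kg_row (p m : V → Fin d → ℝ) (u v : V) :
    (fun x : V × Fin d => m x.1 x.2) ⬝ᵥ rigRow d p s(u, v) = (m u - m v) ⬝ᵥ (p u - p v) := by
  simp only [dotProduct, rigRow, Sym2.lift_mk, Fintype.sum_prod_type]
  rw [Finset.sum_comm]
  refine Finset.sum_congr rfl fun i _ => ?_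
  have : ∀ x : V, m x i * (((if x = u then (1:ℝ) else 0) - if x = v then 1 else 0) * (p u i - p v i))
    = (if x = u then m x i * (p u i - p v i) else 0) - (if x = v then m x i * (p u i - p v i) else 0) := by
    intro x; split_ifs <;> ring
  simp only [this, Finset.sum_sub_distrib, Finset.sum_ite_eq', Finset.mem_univ, if_true]
  simp only [Pi.sub_apply]
  ring

theorem kg_span (S : Set (V × Fin d → ℝ)) (x : V × Fin d → ℝ)
    (h : ∀ m : V → Fin d → ℝ, (∀ s ∈ S, (fun x : V × Fin d => m x.1 x.2) ⬝ᵥ s = 0) →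
      (fun x : V × Fin d => m x.1 x.2) ⬝ᵥ x = 0) : x ∈ Submodule.span ℝ S := by
  by_contra hx
  obtain ⟨f, hfx, hf⟩ := Submodule.exists_le_ker_of_notMem hx
  obtain ⟨g, hg⟩ := kg_func f
  apply hfx
  rw [hg]
  refine h (fun v i => g (v, i)) fun s hs => ?_
  have := hf (Submodule.subset_span hs)
  rw [LinearMap.mem_ker, hg] at this
  exact this

theorem kg_span' (S : Set (V × Fin d → ℝ)) (x : V × Fin d → ℝ) (m : V × Fin d → ℝ)
    (hm : ∀ s ∈ S, m ⬝ᵥ s = 0) (hx : x ∈ Submodule.span ℝ S) : m ⬝ᵥ x = 0 := by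
  induction hx using Submodule.span_induction with
  | mem y hy => exact hm y hy
  | zero => simp
  | add a b _ _ ha hb => rw [dotProduct_add, ha, hb, add_zero]
  | smul c a _ ha => rw [dotProduct_smul, ha, smul_zero]

/-- the complete graph on `W` -/
def kgK (W : Set V) : Set (Sym2 V) := {e | ∃ u ∈ W, ∃ v ∈ W, u ≠ v ∧ e = s(u, v)}

theorem kg_inter (p : V → Fin d → ℝ) (hp : Generic d p) (𝓑 : Set (Finset (Sym2 V)))
    (hne : 𝓑.Nonempty) (x : V × Fin d → ℝ)
    (hx : ∀ B ∈ 𝓑, x ∈ Submodule.span ℝ (rigRow d p '' (B : Set (Sym2 V)))) :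
    x ∈ Submodule.span ℝ (rigRow d p '' kgK {v | ∀ B ∈ 𝓑, v ∈ esupp B}) := by
  classical
  apply kg_span
  intro m hm
  let W : Finset V := Finset.univ.filter fun v => ∀ B ∈ 𝓑, v ∈ esupp B
  obtain ⟨t, ht, htm⟩ := kg_ext p hp W m (by
    intro u hu v hv
    by_cases huv : u = v
    · subst huv; simp
    · rw [← kg_row]
      exact hm _ ⟨s(u, v), ⟨u, by simpa [W] using hu, v, by simpa [W] using hv, huv, rfl⟩, rfl⟩)
  have htx : (fun x : V × Fin d => t (p x.1) x.2) ⬝ᵥ x = 0 := by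
    obtain ⟨B, hB⟩ := hne
    refine kg_span' _ x _ ?_ (hx B hB)
    rintro _ ⟨e, _, rfl⟩
    induction e using Sym2.ind with
    | _ u v => rw [kg_row p (fun v => t (p v))]; exact ht _ _
  rw [← htx, dotProduct, dotProduct]
  refine Finset.sum_congr rfl ?_
  rintro ⟨v, i⟩ _
  by_cases hv : v ∈ W
  · simp only [htm v hv]
  · have : x (v, i) = 0 := by
      simp only [W, Finset.mem_filter, Finset.mem_univ, true_and, not_forall] at hv
      obtain ⟨B, hB, hvB⟩ := hv
      have h1 := kg_span' _ x (Pi.single (v, i) 1) (by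
        rintro _ ⟨e, he, rfl⟩
        rw [single_dotProduct, one_mul]
        have hve : v ∉ e := fun h => hvB (by simp only [esupp, Finset.mem_filter, Finset.mem_univ, true_and]; exact ⟨e, he, h⟩)
        induction e using Sym2.ind with
        | _ a b =>
          rw [Sym2.mem_iff, not_or] at hve
          simp [rigRow, hve.1, hve.2]) (hx B hB)
      rwa [single_dotProduct, one_mul] at h1
    simp [this]

theorem kg_card (p : V → Fin d → ℝ) (hp : Generic d p) (B : Finset (Sym2 V)) (hB : B.Nonempty)
    (hs : ∀ e ∈ B, ¬ e.IsDiag)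
    (hc : ∀ f ∈ B, rigRow d p f ∈ Submodule.span ℝ (rigRow d p '' ((B : Set (Sym2 V)) \ {f}))) :
    d ≤ (esupp B).card := by
  by_contra! hcard
  obtain ⟨f, hf⟩ := hB
  have hcf := hc f hf
  have hsf := hs f hf
  induction f using Sym2.ind with
  | _ u v =>
  rw [Sym2.mk_isDiag_iff] at hsf
  have hmem : ∀ e ∈ B, ∀ w ∈ e, w ∈ esupp B := by
    intro e he w hw
    simp only [esupp, Finset.mem_filter, Finset.mem_univ, true_and]
    exact ⟨e, he, hw⟩
  have hli := kg_li p hp u ((esupp B).erase u) (by simp) (Finset.card_erase_le.trans hcard.le)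
  obtain ⟨h, hh⟩ := kg_solve _ hli (fun w => if w.1 = v then 1 else 0)
  have hh' : ∀ w ∈ esupp B, w ≠ u → h ⬝ᵥ (p u - p w) = if w = v then -1 else 0 := by
    intro w hw hwu
    have := hh ⟨w, Finset.mem_erase.2 ⟨hwu, hw⟩⟩
    simp only [dotProduct_sub] at this ⊢
    split_ifs at this ⊢ <;> linarith
  have key := kg_span' _ _ (fun x : V × Fin d => (fun w => if w = u then h else 0) x.1 x.2) (by
    rintro _ ⟨e, ⟨he, hef⟩, rfl⟩
    have hse := hs e he
    have hme := hmem e he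
    induction e using Sym2.ind with
    | _ a b =>
      rw [kg_row p (fun w => if w = u then h else 0)]
      rw [Sym2.mk_isDiag_iff] at hse
      by_cases hau : a = u
      · subst hau
        have hbv : b ≠ v := by rintro rfl; exact hef rfl
        have := hh' b (hme b (by simp)) (Ne.symm hse)
        simp only [if_neg hbv] at this
        simp [Ne.symm hse, this]
      · by_cases hbu : b = u
        · subst hbu
          have hav : a ≠ v := by rintro rfl; exact hef Sym2.eq_swap
          have := hh' a (hme a (by simp)) hse
          simp only [if_neg hav, dotProduct_sub] at this
          simp only [if_neg hse, if_true, zero_sub, neg_dotProduct, dotProduct_sub]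
          linarith
        · simp [hau, hbu]) hcf
  rw [kg_row p (fun w => if w = u then h else 0)] at key
  have := hh' v (hmem _ hf v (by simp)) (Ne.symm hsf)
  simp [Ne.symm hsf, this] at key

theorem kg_rigid (p : V → Fin d → ℝ) (hp : Generic d p) (B : Finset (Sym2 V)) 
    (hs : ∀ e ∈ B, ¬ e.IsDiag)
    (hc : ∀ f ∈ B, rigRow d p f ∈ Submodule.span ℝ (rigRow d p '' ((B : Set (Sym2 V)) \ {f})))
    (hr : B.Nonempty → IsRigidOn d p (esupp B) B) :
    ∀ e ∈ kgK (esupp B : Set V), rigRow d p e ∈ Submodule.span ℝ (rigRow d p '' (B : Set (Sym2 V))) := by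
  intro e he
  rcases B.eq_empty_or_nonempty with rfl | hB
  · obtain ⟨u, hu, _⟩ := he
    simp [esupp] at hu
  rcases hr hB with ⟨_, h⟩ | hrk
  · obtain ⟨u, hu, v, hv, huv, rfl⟩ := he
    exact Submodule.subset_span ⟨_, h u hu v hv huv, rfl⟩
  have hcard := kg_card p hp B hB hs hc
  obtain ⟨W0, h0, hW0⟩ := Finset.exists_subset_card_eq hcard
  set W := esupp B with hW
  let K' : Finset (Sym2 V) := W0.offDiag.image (Function.uncurry Sym2.mk) ∪
    ((W \ W0) ×ˢ W0).image (Function.uncurry Sym2.mk)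
  have hK'card : K'.card ≤ d.choose 2 + (W.card - d) * d := by
    refine (Finset.card_union_le _ _).trans (add_le_add ?_ ?_)
    · rw [Sym2.card_image_offDiag, hW0]
    · refine Finset.card_image_le.trans ?_
      rw [Finset.card_product, Finset.card_sdiff_of_subset h0, hW0]
  have hle : Submodule.span ℝ (rigRow d p '' kgK (W : Set V)) ≤
      Submodule.span ℝ (rigRow d p '' (K' : Set (Sym2 V))) := by
    rw [Submodule.span_le]
    rintro _ ⟨f, ⟨u, hu, v, hv, huv, rfl⟩, rfl⟩
    apply kg_span
    intro m hm
    have hm' : ∀ a b, s(a, b) ∈ K' → (m a - m b) ⬝ᵥ (p a - p b) = 0 := fun a b hab => by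
      rw [← kg_row]; exact hm _ ⟨_, hab, rfl⟩
    obtain ⟨t, ht, htm⟩ := kg_ext_cross p hp W0 hW0 W m (by
        intro a ha b hb
        by_cases hab : a = b
        · subst hab; simp
        · exact hm' a b (Finset.mem_union_left _ (Finset.mem_image.2
            ⟨(a, b), by simp [ha, hb, hab], rfl⟩))) (by
        intro a ha ha0 b hb
        exact hm' a b (Finset.mem_union_right _ (Finset.mem_image.2
            ⟨(a, b), by simp [ha, hb, ha0], rfl⟩)))
    rw [kg_row, ← htm u hu, ← htm v hv]
    exact ht _ _
  have hBK : Submodule.span ℝ (rigRow d p '' (B : Set (Sym2 V))) ≤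
      Submodule.span ℝ (rigRow d p '' kgK (W : Set V)) := by
    apply Submodule.span_mono
    apply Set.image_mono
    intro f hf
    have hsf := hs f hf
    induction f using Sym2.ind with
    | _ u v =>
      rw [Sym2.mk_isDiag_iff] at hsf
      refine ⟨u, ?_, v, ?_, hsf, rfl⟩
      · simp only [hW, esupp, Finset.coe_filter, Finset.mem_univ, true_and, Set.mem_ofPred_eq]
        exact ⟨_, hf, by simp⟩
      · simp only [hW, esupp, Finset.coe_filter, Finset.mem_univ, true_and, Set.mem_ofPred_eq]
        exact ⟨_, hf, by simp⟩
  have hfr : Module.finrank ℝ (Submodule.span ℝ (rigRow d p '' (K' : Set (Sym2 V)))) ≤ K'.card := by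
    classical
    rw [← Finset.coe_image]
    exact (finrank_span_finset_le_card _).trans Finset.card_image_le
  have heq := Submodule.eq_of_le_of_finrank_le (hBK.trans hle) (by
    refine hfr.trans (hK'card.trans ?_)
    have h1 : (d + 1).choose 2 = d + d.choose 2 := by
      rw [Nat.choose_succ_succ' d 1, Nat.choose_one_right]
    have h2 : d * d = 2 * d.choose 2 + d := by
      rw [Nat.choose_two_right, Nat.mul_div_cancel' (Nat.even_mul_pred_self d).two_dvd]
      cases d with
      | zero => rfl
      | succ n => simp; ring
    obtain ⟨c, hc'⟩ := Nat.exists_eq_add_of_le hcard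
    rw [hc'] at hrk ⊢
    change _ ≤ rrk d p _
    rw [h1] at hrk
    rw [Nat.add_sub_cancel_left]
    zify at h2 ⊢
    push_cast at hrk
    nlinarith)
  rw [heq]
  exact hle (Submodule.subset_span ⟨e, he, rfl⟩)

theorem kg_circ_iff (p : V → Fin d → ℝ) (D : Finset (Sym2 V)) (k : ℕ) :
    IsKFoldCircuit d p D k ↔ kfCirc (rigRow d p) D k := by
  unfold IsKFoldCircuit kfCirc rrk
  have hn := kf_nullity (rigRow d p) D
  refine and_congr (forall₂_congr fun f hf => kf_coloop_iff _ _ f hf) ?_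
  omega

theorem kg_main (p : V → Fin d → ℝ) (hp : Generic d p) (k : ℕ) (hk : 1 ≤ k)
    (E : Finset (Sym2 V)) (hsimple : ∀ e ∈ E, ¬ e.IsDiag)
    (hE : IsKFoldCircuit d p E k)
    (hrigidsub : ∀ B ⊆ E, B.Nonempty → IsKFoldCircuit d p B (k-1) →
      IsRigidOn d p (esupp B) B) :
    IsBalanced d p E k := by
  have hEc := (kg_circ_iff p E k).1 hE
  have hparts : ∀ A, IsPrincipalPart d p E k A ↔ ∃ e ∈ E, A = kfA (rigRow d p) E e := by
    intro A
    rw [← kf_parts (rigRow d p) E k hk hEc A]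
    simp only [IsPrincipalPart, kg_circ_iff]
  have hset : {A | IsPrincipalPart d p E k A} = (E.image (kfA (rigRow d p) E) : Set _) := by
    ext A
    simp [hparts, eq_comm]
  have hEne : E.Nonempty := by
    rw [← Finset.card_pos, ← hE.2]; omega
  unfold IsBalanced
  rw [hset, Set.ncard_coe_finset]
  have hincl : ∀ (F : Set (Sym2 V)) e, rrk d p (insert e F) = rrk d p F ↔
      rigRow d p e ∈ Submodule.span ℝ (rigRow d p '' F) := by
    intro F e
    unfold rrk
    constructor
    · intro h
      rw [kf_finrank_insert (rigRow d p) _ _ (Set.subset_insert e F) h.symm]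
      exact Submodule.subset_span ⟨e, by simp, rfl⟩
    · intro h
      rw [Set.image_insert_eq, Submodule.span_insert_eq_span h]
  apply kf_dim (rigRow d p) E k hk hEc
  intro x
  constructor
  · intro hx e he
    refine Submodule.span_le.2 ?_ hx
    rintro _ ⟨f, hf, rfl⟩
    simp only [Set.mem_iInter] at hf
    exact (hincl _ _).1 (hf _ (by simpa using ⟨e, he, rfl⟩)).2
  · intro hx
    have h1 := kg_inter p hp {B | ∃ e ∈ E, B = E \ kfA (rigRow d p) E e}
      (by obtain ⟨e, he⟩ := hEne; exact ⟨_, e, he, rfl⟩) x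
      (by rintro B ⟨e, he, rfl⟩; exact hx e he)
    refine Submodule.span_mono (Set.image_mono ?_) h1
    rintro f ⟨u, hu, v, hv, huv, rfl⟩
    simp only [Set.mem_iInter]
    intro A hA
    simp only [Finset.coe_image, Set.mem_image] at hA
    obtain ⟨e, he, rfl⟩ := hA
    refine ⟨by simpa using huv, (hincl _ _).2 ?_⟩
    have hcB : kfCirc (rigRow d p) (E \ kfA (rigRow d p) E e) (k - 1) := by
      obtain ⟨B, hBE, hB, hA⟩ := (kf_parts (rigRow d p) E k hk hEc _).2 ⟨e, he, rfl⟩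
      rw [hA, Finset.sdiff_sdiff_eq_self hBE]
      exact hB
    apply kg_rigid p hp
    · exact fun g hg => hsimple g (Finset.sdiff_subset hg)
    · intro g hg
      exact (kf_mem_span_iff _ _ g hg).2 (hcB.1 g hg)
    · intro hne
      exact hrigidsub _ Finset.sdiff_subset hne ((kg_circ_iff p _ _).2 hcB)
    · exact ⟨u, hu _ ⟨e, he, rfl⟩, v, hv _ ⟨e, he, rfl⟩, huv, rfl⟩
end GeoPart

/-- Theorem 3.16: a `k`-fold `R_d`-circuit all of whose nonempty `(k-1)`-fold
circuits are `R_d`-rigid is balanced. -/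
theorem kfold_circuit_rigid_subcircuits_balanced
    (d k : ℕ) (hd : 1 ≤ d) (hk : 1 ≤ k)
    {V : Type*} [Fintype V] [DecidableEq V]
    (E : Finset (Sym2 V)) (hsimple : ∀ e ∈ E, ¬ e.IsDiag)
    (hcov : ∀ w : V, ∃ e ∈ E, w ∈ e)
    (p : V → Fin d → ℝ) (hp : Generic d p)
    (hE : IsKFoldCircuit d p E k)
    (hrigidsub : ∀ B ⊆ E, B.Nonempty → IsKFoldCircuit d p B (k-1) →
      IsRigidOn d p (esupp B) B) :
    IsBalanced d p E k := by
  exact kg_main p hp k hk E hsimple hE hrigidsub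
end
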